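/- arXiv:2201.00476 — 2 statements merged into one kernel-verified Lean document; each statement's English description precedes it below -/
import Mathlib

section
/- Let s ≥ 2, let P_1,...,P_s be distinct points in P^n over an algebraically closed field K, and let m_1 ≥ m_2 ≥ ... ≥ m_s be positive integers. If I = ℘_1^{m_1} ∩ ... ∩ ℘_s^{m_s} ⊂ R = K[X_0,...,X_n], then reg(R/I) ≥ m_1 + m_2 - 1. -/
open MvPolynomial

noncomputable section

/-- The defining prime ideal of the point of projective space with homogeneous
coordinates `p`: the ideal generated by the linear forms vanishing at `p`. -/
def pointIdeal {K : Type} [Field K] {N : ℕ} (p : Fin N → K) :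
    Ideal (MvPolynomial (Fin N) K) :=
  Ideal.span {f | f.IsHomogeneous 1 ∧ eval p f = 0}

/-- The ideal of the fat point scheme `m₁P₁ + ⋯ + m_sP_s`. -/
def fatIdeal {K : Type} [Field K] {N s : ℕ} (p : Fin s → Fin N → K) (m : Fin s → ℕ) :
    Ideal (MvPolynomial (Fin N) K) :=
  ⨅ i, pointIdeal (p i) ^ (m i)

/-- `dim_K` of the degree-`t` graded piece of the ideal `I`. -/
def gradedDim (K : Type) [Field K] {N : ℕ} (I : Ideal (MvPolynomial (Fin N) K)) (t : ℕ) : ℕ :=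
  Module.finrank K ↥(homogeneousSubmodule (Fin N) K t ⊓ I.restrictScalars K)

/-- The Hilbert function of `R/I` in degree `t`. -/
def hilbFn (K : Type) [Field K] {N : ℕ} (I : Ideal (MvPolynomial (Fin N) K)) (t : ℕ) : ℕ :=
  Module.finrank K ↥(homogeneousSubmodule (Fin N) K t) - gradedDim K I t

/-- The regularity index of `R/I` relative to the multiplicity `e`:
the least `t` with `H_{R/I}(t) = e`. -/
def regIndex (K : Type) [Field K] {N : ℕ} (I : Ideal (MvPolynomial (Fin N) K)) (e : ℕ) : ℕ :=
  sInf {t | hilbFn K I t = e}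

/-- The multiplicity `e(R/I) = ∑ C(mᵢ+n-1, n)` of a fat point scheme in `ℙⁿ`. -/
def fatMult (n : ℕ) {s : ℕ} (m : Fin s → ℕ) : ℕ :=
  ∑ i, (m i + n - 1).choose n

/-- The regularity index of the fat point scheme `m₁P₁ + ⋯ + m_sP_s` in `ℙⁿ`. -/
def regFat (K : Type) [Field K] {n s : ℕ} (p : Fin s → Fin (n + 1) → K) (m : Fin s → ℕ) : ℕ :=
  regIndex K (fatIdeal p m) (fatMult n m)

/-- The coordinate vectors `p i` represent distinct points of projective space. -/
def ProjDistinct {K : Type} [Field K] {N s : ℕ} (p : Fin s → Fin N → K) : Prop :=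
  (∀ i, p i ≠ 0) ∧ ∀ i j, i ≠ j → ∀ c : K, p i ≠ c • p j

/-- The points `p i`, `i ∈ Q`, lie on a `j`-dimensional linear subspace of `ℙⁿ`. -/
def OnLinearSubspace {K : Type} [Field K] {N s : ℕ} (p : Fin s → Fin N → K)
    (Q : Finset (Fin s)) (j : ℕ) : Prop :=
  ∃ W : Submodule K (Fin N → K), Module.finrank K ↥W ≤ j + 1 ∧ ∀ i ∈ Q, p i ∈ W

open Classical in
/-- The Segre bound `T(Z) = max {T_j(Z) | j = 1,…,n}` for fat points in `ℙⁿ`. -/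
def segreBound {K : Type} [Field K] (n : ℕ) {s : ℕ} (p : Fin s → Fin (n + 1) → K)
    (m : Fin s → ℕ) : ℕ :=
  (Finset.Icc 1 n).sup fun j =>
    Finset.univ.powerset.sup fun Q =>
      if Q.Nonempty ∧ OnLinearSubspace p Q j then (∑ i ∈ Q, m i + j - 2) / j else 0

/-- The standard coordinate point `(1,0,…,0)`. -/
def stdPt (K : Type) [Field K] (N : ℕ) : Fin N → K := fun j => if (j : ℕ) = 0 then 1 else 0

/-!
Evaluating modulo each `℘ᵢ ^ mᵢ` embeds `(R/I)_t` into `∏ᵢ (R/℘ᵢ ^ mᵢ)_t`. Moving `Pᵢ` to a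
coordinate point and counting monomials, the `i`-th factor has dimension
`C(min(mᵢ, t + 1) + n - 1, n)`. Hence `H_{R/I}(t) = e(R/I)` if and only if every `mᵢ ≤ t + 1` and
the map from `R_t` to the product is onto. It is onto for large `t`, because one can multiply by
products of powers of linear forms vanishing at the other points; so the infimum defining the
regularity index is attained. If it is onto in a degree `t < mᵢ + mⱼ - 1` with `mᵢ ≤ t + 1`, choose
linear forms `L₁` and `L₂` with values `1, 0` and `0, 1` at `Pᵢ, Pⱼ`. Then the form
`L₁ ^ (t - mᵢ + 1) * L₂ ^ (mᵢ - 1)` of degree `t` lies in `℘ᵢ ^ mᵢ + ℘ⱼ ^ mⱼ`, which is refuted by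
restricting to the line `PᵢPⱼ`.
-/

section LinearAlgebra

theorem pi_mkQ_surjective_iff {R M ι : Type*} [Ring R] [AddCommGroup M] [Module R M] [Finite ι]
    (W : ι → Submodule R M) :
    Function.Surjective (LinearMap.pi fun i => (W i).mkQ) ↔
      ∀ i v, ∃ u, u - v ∈ W i ∧ ∀ j ≠ i, u ∈ W j := by
  classical
  have := Fintype.ofFinite ι
  simp only [← Submodule.Quotient.eq (W _), ← Submodule.Quotient.mk_eq_zero (W _),
    ← Submodule.mkQ_apply]
  constructor
  · intro h i v
    obtain ⟨u, hu⟩ := h (Pi.single i ((W i).mkQ v))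
    exact ⟨u, by simpa using congrFun hu i, fun j hj => by simpa [hj] using congrFun hu j⟩
  · intro h w
    choose v hv using fun i => (W i).mkQ_surjective (w i)
    choose u hu hu' using fun i => h i (v i)
    refine ⟨∑ i, u i, funext fun i => ?_⟩
    rw [LinearMap.pi_apply, map_sum, Finset.sum_eq_single i (fun j _ hj => hu' j i hj.symm)
      (by simp), hu, hv]

theorem finrank_quotient_iInf {R M ι : Type*} [Ring R] [AddCommGroup M] [Module R M]
    (W : ι → Submodule R M) :
    Module.finrank R (M ⧸ ⨅ i, W i) =
      Module.finrank R (LinearMap.range (LinearMap.pi fun i => (W i).mkQ)) := by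
  have hker : LinearMap.ker (LinearMap.pi fun i => (W i).mkQ) = ⨅ i, W i := by
    simp only [LinearMap.ker_pi, Submodule.ker_mkQ]
  rw [← hker, (LinearMap.quotKerEquivRange _).finrank_eq]

variable {K V ι : Type*} [Field K] [AddCommGroup V] [Module K V] [FiniteDimensional K V]
  [Fintype ι] (W : ι → Submodule K V)

theorem finrank_quotient_iInf_le :
    Module.finrank K (V ⧸ ⨅ i, W i) ≤ ∑ i, Module.finrank K (V ⧸ W i) := by
  rw [finrank_quotient_iInf, ← Module.finrank_pi_fintype]
  exact Submodule.finrank_le _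

theorem finrank_quotient_iInf_eq_iff :
    Module.finrank K (V ⧸ ⨅ i, W i) = ∑ i, Module.finrank K (V ⧸ W i) ↔
      ∀ i v, ∃ u, u - v ∈ W i ∧ ∀ j ≠ i, u ∈ W j := by
  rw [finrank_quotient_iInf, ← Module.finrank_pi_fintype, ← pi_mkQ_surjective_iff,
    ← LinearMap.range_eq_top]
  exact ⟨Submodule.eq_top_of_finrank_eq, fun h => by rw [h, finrank_top]⟩

end LinearAlgebra

section HilbertFunction

instance finite_homogeneousSubmodule {σ R : Type*} [Finite σ] [CommSemiring R] (t : ℕ) :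
    Module.Finite R (homogeneousSubmodule σ R t) :=
  Module.Finite.iff_fg.2 (homogeneousSubmodule_fg ..)

variable {K : Type} [Field K] {N : ℕ}

/-- The graded piece `I_t` of an ideal `I`, as a subspace of the space `R_t` of forms of
degree `t`. -/
def gradedPiece (I : Ideal (MvPolynomial (Fin N) K)) (t : ℕ) :
    Submodule K (homogeneousSubmodule (Fin N) K t) :=
  (I.restrictScalars K).submoduleOf (homogeneousSubmodule (Fin N) K t)

theorem mem_gradedPiece {I : Ideal (MvPolynomial (Fin N) K)} {t : ℕ}
    {f : homogeneousSubmodule (Fin N) K t} : f ∈ gradedPiece I t ↔ (f : MvPolynomial _ K) ∈ I :=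
  Iff.rfl

theorem gradedPiece_iInf {ι : Sort*} (I : ι → Ideal (MvPolynomial (Fin N) K)) (t : ℕ) :
    gradedPiece (⨅ i, I i) t = ⨅ i, gradedPiece (I i) t := by
  ext f
  simp only [Submodule.mem_iInf, mem_gradedPiece]

theorem hilbFn_eq_finrank_quotient (I : Ideal (MvPolynomial (Fin N) K)) (t : ℕ) :
    hilbFn K I t = Module.finrank K (homogeneousSubmodule (Fin N) K t ⧸ gradedPiece I t) := by
  have hdim : gradedDim K I t = Module.finrank K (gradedPiece I t) := by
    rw [gradedDim, ← Submodule.map_comap_subtype, Submodule.finrank_map_subtype_eq]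
    rfl
  rw [hilbFn, hdim, Submodule.finrank_quotient]

theorem hilbFn_eq_finrank_of_surjective {I : Ideal (MvPolynomial (Fin N) K)} {t : ℕ} {W : Type*}
    [AddCommGroup W] [Module K W] (T : homogeneousSubmodule (Fin N) K t →ₗ[K] W)
    (hT : Function.Surjective T) (hker : ∀ f, T f = 0 ↔ (f : MvPolynomial (Fin N) K) ∈ I) :
    hilbFn K I t = Module.finrank K W := by
  have h : LinearMap.ker T = gradedPiece I t := Submodule.ext hker
  rw [hilbFn_eq_finrank_quotient, ← h, (T.quotKerEquivOfSurjective hT).finrank_eq]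

/-- The ideals `I i` are separated in degree `t` if `R_t → ∏ i, (R / I i)_t` is surjective.
For finitely many ideals this can be tested on each factor separately, which is the form taken
here. -/
def SeparatedInDegree {ι : Type*} (I : ι → Ideal (MvPolynomial (Fin N) K)) (t : ℕ) : Prop :=
  ∀ i, ∀ g : MvPolynomial (Fin N) K, g.IsHomogeneous t →
    ∃ f : MvPolynomial (Fin N) K, f.IsHomogeneous t ∧ f - g ∈ I i ∧ ∀ j ≠ i, f ∈ I j

variable {ι : Type*} [Fintype ι]

theorem hilbFn_iInf_le (I : ι → Ideal (MvPolynomial (Fin N) K)) (t : ℕ) :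
    hilbFn K (⨅ i, I i) t ≤ ∑ i, hilbFn K (I i) t := by
  rw [hilbFn_eq_finrank_quotient, gradedPiece_iInf]
  simpa only [hilbFn_eq_finrank_quotient] using
    finrank_quotient_iInf_le fun i => gradedPiece (I i) t

theorem hilbFn_iInf_eq_iff (I : ι → Ideal (MvPolynomial (Fin N) K)) (t : ℕ) :
    hilbFn K (⨅ i, I i) t = ∑ i, hilbFn K (I i) t ↔ SeparatedInDegree I t := by
  rw [hilbFn_eq_finrank_quotient, gradedPiece_iInf]
  simp only [hilbFn_eq_finrank_quotient, finrank_quotient_iInf_eq_iff]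
  simp only [SeparatedInDegree, Subtype.forall, Subtype.exists, mem_gradedPiece,
    AddSubgroupClass.coe_sub, mem_homogeneousSubmodule, exists_prop]

end HilbertFunction

section LinearSubstitution

variable {R σ τ υ : Type*} [CommSemiring R] [Fintype τ]

/-- The linear substitution `Xᵢ ↦ ∑ⱼ Aᵢⱼ Xⱼ`, that is, composition of polynomial functions with
the linear map `v ↦ A *ᵥ v`. -/
def linSubst (A : Matrix σ τ R) : MvPolynomial σ R →ₐ[R] MvPolynomial τ R :=
  bind₁ A.toMvPolynomial

theorem eval_linSubst (A : Matrix σ τ R) (v : τ → R) (f : MvPolynomial σ R) :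
    eval v (linSubst A f) = eval (A.mulVec v) f := by
  rw [linSubst, ← coe_aeval_eq_eval, ← coe_aeval_eq_eval, RingHom.coe_coe, RingHom.coe_coe,
    aeval_bind₁]
  congr 2 with i
  exact A.toMvPolynomial_eval_eq_apply i v

theorem isHomogeneous_linSubst (A : Matrix σ τ R) {f : MvPolynomial σ R} {t : ℕ}
    (hf : f.IsHomogeneous t) : (linSubst A f).IsHomogeneous t :=
  one_mul t ▸ hf.aeval A.toMvPolynomial A.toMvPolynomial_isHomogeneous

theorem linSubst_one [DecidableEq τ] (f : MvPolynomial τ R) :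
    linSubst (1 : Matrix τ τ R) f = f := by
  rw [linSubst, Matrix.toMvPolynomial_one, bind₁_X_left, AlgHom.id_apply]

theorem linSubst_linSubst [Fintype υ] (A : Matrix σ τ R) (B : Matrix τ υ R)
    (f : MvPolynomial σ R) : linSubst B (linSubst A f) = linSubst (A * B) f := by
  simp only [linSubst, bind₁_bind₁, ← Matrix.toMvPolynomial_mul]

theorem eq_sum_eval_single_smul_X [DecidableEq τ] {f : MvPolynomial τ R}
    (hf : f.IsHomogeneous 1) : f = ∑ j, eval (Pi.single j 1) f • X j := by
  obtain ⟨c, rfl⟩ := (Submodule.mem_span_range_iff_exists_fun R).1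
    (homogeneousSubmodule_one_eq_span_X.le hf)
  simp [Pi.single_apply]

end LinearSubstitution

section PointIdeal

variable {K : Type} [Field K] {M N : ℕ}

theorem linSubst_mem_pointIdeal_pow (A : Matrix (Fin M) (Fin N) K) {v : Fin N → K} {k : ℕ}
    {f : MvPolynomial (Fin M) K} (hf : f ∈ pointIdeal (A.mulVec v) ^ k) :
    linSubst A f ∈ pointIdeal v ^ k := by
  have hle : pointIdeal (A.mulVec v) ≤ (pointIdeal v).comap (linSubst A) :=
    Ideal.span_le.2 fun g hg =>
      Ideal.subset_span ⟨isHomogeneous_linSubst A hg.1, (eval_linSubst A v g).trans hg.2⟩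
  exact Ideal.le_comap_pow _ k (Ideal.pow_right_mono hle k hf)

theorem linSubst_mem_pointIdeal_pow_iff (A : (Matrix (Fin N) (Fin N) K)ˣ) {v : Fin N → K} {k : ℕ}
    {f : MvPolynomial (Fin N) K} :
    linSubst (A : Matrix (Fin N) (Fin N) K) f ∈ pointIdeal v ^ k ↔
      f ∈ pointIdeal ((A : Matrix (Fin N) (Fin N) K).mulVec v) ^ k := by
  refine ⟨fun hf => ?_, linSubst_mem_pointIdeal_pow _⟩
  have hv : (A⁻¹).val.mulVec (A.val.mulVec v) = v := by
    rw [Matrix.mulVec_mulVec, Units.inv_mul, Matrix.one_mulVec]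
  rw [← hv] at hf
  simpa only [linSubst_linSubst, Units.mul_inv, linSubst_one] using
    linSubst_mem_pointIdeal_pow (A⁻¹).val hf

theorem exists_linearEquiv_apply_eq {V : Type*} [AddCommGroup V] [Module K V] {v w : V}
    (hv : v ≠ 0) (hw : w ≠ 0) : ∃ φ : V ≃ₗ[K] V, φ v = w := by
  let e (u : V) (hu : u ≠ 0) := LinearEquiv.toSpanNonzeroSingleton K V u hu
  obtain ⟨φ, hφ⟩ := Submodule.exists_linearEquiv_restrict_eq ((e v hv).symm ≪≫ₗ e w hw)
  refine ⟨φ, ?_⟩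
  have h := hφ (e v hv 1)
  rw [LinearEquiv.trans_apply, LinearEquiv.symm_apply_apply] at h
  simpa [e] using h.symm

theorem exists_unit_mulVec_eq {v w : Fin N → K} (hv : v ≠ 0) (hw : w ≠ 0) :
    ∃ A : (Matrix (Fin N) (Fin N) K)ˣ, A.val.mulVec v = w := by
  obtain ⟨φ, hφ⟩ := exists_linearEquiv_apply_eq (K := K) hv hw
  refine ⟨Matrix.GeneralLinearGroup.toLin.symm
    ((LinearMap.GeneralLinearGroup.generalLinearEquiv K _).symm φ), ?_⟩
  rw [← Matrix.mulVecLin_apply, ← Matrix.GeneralLinearGroup.coe_toLin, MulEquiv.apply_symm_apply]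
  exact hφ

theorem pointIdeal_single (i : Fin N) :
    pointIdeal (Pi.single i 1 : Fin N → K) = Ideal.span (X '' {i}ᶜ) := by
  refine le_antisymm (Ideal.span_le.2 ?_) (Ideal.span_mono ?_)
  · rintro f ⟨hf, hfi⟩
    rw [eq_sum_eval_single_smul_X hf]
    refine sum_mem fun j _ => ?_
    rcases eq_or_ne j i with rfl | hj
    · rw [hfi, zero_smul]
      exact zero_mem _
    · exact Submodule.smul_of_tower_mem _ _ (Ideal.subset_span ⟨j, hj, rfl⟩)
  · rintro _ ⟨j, hj, rfl⟩
    exact ⟨isHomogeneous_X K j, by rw [eval_X, Pi.single_eq_of_ne hj]⟩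

theorem mem_pointIdeal_single_pow_iff {i : Fin N} {k : ℕ} {f : MvPolynomial (Fin N) K} :
    f ∈ pointIdeal (Pi.single i 1 : Fin N → K) ^ k ↔
      ∀ d ∈ f.support, k ≤ (d.erase i).degree := by
  have hspan : pointIdeal (Pi.single i 1 : Fin N → K) ^ k =
      Ideal.span ((monomial · 1) '' {d | d.degree = k ∧ ↑d.support ⊆ ({i}ᶜ : Set (Fin N))}) := by
    rw [pointIdeal_single, Ideal.span, Submodule.span_pow,
      Finsupp.image_pow_eq_finsuppProd_image]
    simp [monomial_eq, Ideal.span]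
  rw [hspan, mem_ideal_span_monomial_image]
  refine forall₂_congr fun d _ => ⟨?_, fun h => ?_⟩
  · rintro ⟨e, ⟨rfl, he⟩, hed⟩
    refine Finsupp.degree_mono fun j => ?_
    rw [Finsupp.erase_apply]
    split_ifs with hj
    · exact (Finsupp.notMem_support_iff.1 fun hji => he hji hj).le
    · exact hed j
  · obtain ⟨e, he, hk⟩ := Finsupp.exists_le_degree_eq _ k h
    refine ⟨e, ⟨hk, fun j hj hji => ?_⟩, fun j => (he j).trans ?_⟩
    · obtain rfl : j = i := hji
      exact Finsupp.mem_support_iff.1 hj (by simpa using he j)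
    · rw [Finsupp.erase_apply]
      split_ifs <;> simp

end PointIdeal

section Counting

theorem strictMono_multichoose_succ (k : ℕ) : StrictMono fun m : ℕ => m.multichoose (k + 1) :=
  strictMono_nat_of_lt_succ fun m => by
    rw [Nat.multichoose_succ_succ, Nat.lt_add_right_iff_pos, Nat.multichoose_eq]
    exact Nat.choose_pos (by omega)

theorem card_degree_lt (n m : ℕ) :
    Nat.card {a : Fin (n + 1) →₀ ℕ // a.degree < m} = m.multichoose (n + 1) := by
  have hmem (a : Fin (n + 1) →₀ ℕ) :
      a ∈ (Finset.range m).biUnion (Finset.univ : Finset (Fin (n + 1))).finsuppAntidiag ↔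
        a.degree < m := by
    simp [Finset.mem_finsuppAntidiag, Finsupp.degree_eq_sum]
  have hdisj : (Finset.range m : Set ℕ).PairwiseDisjoint
      (Finset.univ : Finset (Fin (n + 1))).finsuppAntidiag :=
    fun a _ b _ hab => Finset.disjoint_left.2 fun x ha hb =>
      hab ((Finset.mem_finsuppAntidiag.1 ha).1.symm.trans (Finset.mem_finsuppAntidiag.1 hb).1)
  rw [Nat.subtype_card _ hmem, Finset.card_biUnion hdisj]
  simp only [Finset.card_finsuppAntidiag_nat_eq_multichoose, Finset.card_univ, Fintype.card_fin]
  rcases m with _ | m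
  · simp
  · rw [Nat.sum_range_multichoose, Nat.multichoose_eq, Nat.succ_add_sub_one, add_comm]

theorem degree_eq_add_degree_erase {σ : Type*} (i : σ) (d : σ →₀ ℕ) :
    d.degree = d i + (d.erase i).degree := by
  conv_lhs => rw [← Finsupp.single_add_erase i d, map_add, Finsupp.degree_single]

theorem degree_eq_add_degree_tail {n : ℕ} (d : Fin (n + 1) →₀ ℕ) :
    d.degree = d 0 + d.tail.degree := by
  simp only [Finsupp.degree_eq_sum, Fin.sum_univ_succ, Finsupp.tail_apply]

theorem card_degree_eq_degree_erase_lt (n m t : ℕ) :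
    Nat.card {d : Fin (n + 1) →₀ ℕ // d.degree = t ∧ (d.erase 0).degree < m} =
      Nat.card {a : Fin n →₀ ℕ // a.degree < min m (t + 1)} := by
  have herase (d : Fin (n + 1) →₀ ℕ) : (d.erase 0).degree = d.tail.degree :=
    Nat.add_left_cancel ((degree_eq_add_degree_erase 0 d).symm.trans (degree_eq_add_degree_tail d))
  refine Nat.card_congr
    { toFun d := ⟨d.1.tail, ?_⟩
      invFun a := ⟨Finsupp.cons (t - a.1.degree) a.1, ?_, ?_⟩
      left_inv d := Subtype.ext ?_
      right_inv a := Subtype.ext (Finsupp.tail_cons _ _) }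
  · have := degree_eq_add_degree_tail d.1
    have := herase d.1
    have := d.2
    omega
  · rw [degree_eq_add_degree_tail, Finsupp.cons_zero, Finsupp.tail_cons]
    have := a.2
    omega
  · rw [herase, Finsupp.tail_cons]
    exact a.2.trans_le (min_le_left _ _)
  · have hd : t - d.1.tail.degree = d.1 0 := by
      have := degree_eq_add_degree_tail d.1
      have := d.2.1
      omega
    exact (congrArg (Finsupp.cons · d.1.tail) hd).trans (Finsupp.cons_tail d.1)

end Counting

section HilbertFunctionFatPoint

variable {K : Type} [Field K] {N : ℕ}

theorem hilbFn_pointIdeal_pow_mulVec (A : (Matrix (Fin N) (Fin N) K)ˣ) (v : Fin N → K)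
    (m t : ℕ) :
    hilbFn K (pointIdeal (A.val.mulVec v) ^ m) t = hilbFn K (pointIdeal v ^ m) t := by
  let S : homogeneousSubmodule (Fin N) K t →ₗ[K] homogeneousSubmodule (Fin N) K t :=
    (linSubst A.val).toLinearMap.restrict fun _ => isHomogeneous_linSubst A.val
  have hS : Function.Surjective S := fun g =>
    ⟨⟨linSubst (A⁻¹).val g, isHomogeneous_linSubst _ g.2⟩, Subtype.ext <| by
      change linSubst A.val (linSubst (A⁻¹).val g.1) = g.1
      rw [linSubst_linSubst, Units.inv_mul, linSubst_one]⟩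
  rw [hilbFn_eq_finrank_quotient (pointIdeal v ^ m)]
  refine hilbFn_eq_finrank_of_surjective ((gradedPiece (pointIdeal v ^ m) t).mkQ ∘ₗ S)
    ((Submodule.mkQ_surjective _).comp hS) fun f => ?_
  rw [LinearMap.comp_apply, Submodule.mkQ_apply, Submodule.Quotient.mk_eq_zero, mem_gradedPiece]
  exact linSubst_mem_pointIdeal_pow_iff A

theorem hilbFn_pointIdeal_single_pow (i : Fin N) (m t : ℕ) :
    hilbFn K (pointIdeal (Pi.single i 1 : Fin N → K) ^ m) t =
      Nat.card {d : Fin N →₀ ℕ // d.degree = t ∧ (d.erase i).degree < m} := by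
  set D := {d : Fin N →₀ ℕ // d.degree = t ∧ (d.erase i).degree < m}
  have hfin : Finite D :=
    (Finsupp.finite_of_degree_le t).subset fun d hd => hd.1.le
  have := Fintype.ofFinite D
  let T : homogeneousSubmodule (Fin N) K t →ₗ[K] (D → K) :=
    LinearMap.pi fun d => lcoeff K d.1 ∘ₗ Submodule.subtype _
  have hT : Function.Surjective T := fun w => by
    refine ⟨⟨∑ d : D, monomial d.1 (w d),
      sum_mem fun d _ => isHomogeneous_monomial _ d.2.1⟩, funext fun d => ?_⟩
    simp [T, coeff_monomial, Subtype.coe_inj]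
  rw [hilbFn_eq_finrank_of_surjective T hT fun f => ?_, Module.finrank_fintype_fun_eq_card,
    Nat.card_eq_fintype_card]
  rw [mem_pointIdeal_single_pow_iff]
  constructor
  · intro hf d hd
    by_contra! hlt
    have hdeg : d.degree = t :=
      not_imp_comm.1 (IsHomogeneous.coeff_eq_zero f.2) (mem_support_iff.1 hd)
    exact mem_support_iff.1 hd (congrFun hf ⟨d, hdeg, hlt⟩)
  · intro hf
    refine funext fun d => notMem_support_iff.1 fun hd => ?_
    exact (hf d.1 hd).not_gt d.2.2

theorem hilbFn_pointIdeal_pow {n : ℕ} {p : Fin (n + 2) → K} (hp : p ≠ 0) (m t : ℕ) :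
    hilbFn K (pointIdeal p ^ m) t = (min m (t + 1)).multichoose (n + 1) := by
  obtain ⟨A, rfl⟩ := exists_unit_mulVec_eq (v := Pi.single 0 1) (by simp) hp
  rw [hilbFn_pointIdeal_pow_mulVec, hilbFn_pointIdeal_single_pow, card_degree_eq_degree_erase_lt,
    card_degree_lt]

variable {n s : ℕ} {p : Fin s → Fin (n + 2) → K}

theorem hilbFn_fatIdeal_eq_fatMult_iff (hp : ∀ i, p i ≠ 0) (m : Fin s → ℕ) (t : ℕ) :
    hilbFn K (fatIdeal p m) t = fatMult (n + 1) m ↔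
      SeparatedInDegree (fun i => pointIdeal (p i) ^ m i) t ∧ ∀ i, m i ≤ t + 1 := by
  have hle : ∀ i ∈ Finset.univ,
      hilbFn K (pointIdeal (p i) ^ m i) t ≤ (m i).multichoose (n + 1) := fun i _ => by
    rw [hilbFn_pointIdeal_pow (hp i)]
    exact (strictMono_multichoose_succ n).monotone (min_le_left _ _)
  have hsum : ∑ i, hilbFn K (pointIdeal (p i) ^ m i) t = fatMult (n + 1) m ↔
      ∀ i, m i ≤ t + 1 := by
    simp only [fatMult, ← Nat.multichoose_eq, Finset.sum_eq_sum_iff_of_le hle]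
    simp only [Finset.mem_univ, true_imp_iff, hilbFn_pointIdeal_pow (hp _),
      (strictMono_multichoose_succ n).injective.eq_iff, min_eq_left_iff]
  have hsub := hilbFn_iInf_le (fun i => pointIdeal (p i) ^ m i) t
  have htot : ∑ i, hilbFn K (pointIdeal (p i) ^ m i) t ≤ fatMult (n + 1) m := by
    simpa only [fatMult, ← Nat.multichoose_eq] using Finset.sum_le_sum hle
  rw [← hsum, ← hilbFn_iInf_eq_iff, fatIdeal]
  omega

end HilbertFunctionFatPoint

section Separation

variable {K : Type} [Field K] {N s : ℕ}

theorem exists_linearForm_eval_eq (φ : (Fin N → K) →ₗ[K] K) :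
    ∃ L : MvPolynomial (Fin N) K, L.IsHomogeneous 1 ∧ ∀ v, eval v L = φ v :=
  ⟨(LinearMap.toMatrix' (LinearMap.pi fun _ : Unit => φ)).toMvPolynomial (),
    Matrix.toMvPolynomial_isHomogeneous _ _, fun v => by
      rw [Matrix.toMvPolynomial_eval_eq_apply, LinearMap.toMatrix'_mulVec, LinearMap.pi_apply]⟩

theorem exists_linearForm_eval_eq_one_eval_eq_zero {p q : Fin N → K} (h : ∀ c : K, p ≠ c • q) :
    ∃ L : MvPolynomial (Fin N) K, L.IsHomogeneous 1 ∧ eval p L = 1 ∧ eval q L = 0 := by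
  have hpq : p ∉ Submodule.span K {q} := fun hmem => by
    obtain ⟨c, hc⟩ := Submodule.mem_span_singleton.1 hmem
    exact h c hc.symm
  obtain ⟨φ, hφp, hφq⟩ := Submodule.exists_le_ker_of_notMem hpq
  obtain ⟨L, hL, hLφ⟩ := exists_linearForm_eval_eq ((φ p)⁻¹ • φ)
  refine ⟨L, hL, ?_, ?_⟩
  · rw [hLφ, LinearMap.smul_apply, smul_eq_mul, inv_mul_cancel₀ hφp]
  · rw [hLφ, LinearMap.smul_apply, hφq (Submodule.mem_span_singleton_self q), smul_zero]

theorem exists_sub_X_pow_mul_mem_pointIdeal_single_pow (i : Fin N) {t r k : ℕ} (hk : k ≤ t + 1)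
    {g : MvPolynomial (Fin N) K} (hg : g.IsHomogeneous (r + t)) :
    ∃ h : MvPolynomial (Fin N) K, h.IsHomogeneous t ∧
      g - X i ^ r * h ∈ pointIdeal (Pi.single i 1 : Fin N → K) ^ k := by
  refine ⟨g.divMonomial (Finsupp.single i r), fun d hd => ?_, ?_⟩
  · have h := hg (coeff_divMonomial (Finsupp.single i r) g d ▸ hd)
    rwa [map_add, Finsupp.weight_single, Pi.one_apply, smul_eq_mul, mul_one,
      Nat.add_left_cancel_iff] at h
  · have hmod : g - X i ^ r * g.divMonomial (Finsupp.single i r) =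
        g.modMonomial (Finsupp.single i r) := by
      rw [X_pow_eq_monomial, sub_eq_iff_eq_add', divMonomial_add_modMonomial]
    rw [hmod, mem_pointIdeal_single_pow_iff]
    intro d hd
    have hlt : ¬ Finsupp.single i r ≤ d := fun hle =>
      mem_support_iff.1 hd (coeff_modMonomial_of_le g hle)
    have hcoeff : coeff d g ≠ 0 := coeff_modMonomial_of_not_le g hlt ▸ mem_support_iff.1 hd
    have hdeg : d.degree = r + t := not_imp_comm.1 hg.coeff_eq_zero hcoeff
    rw [Finsupp.single_le_iff] at hlt
    rw [degree_eq_add_degree_erase i d] at hdeg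
    omega

theorem eval_eq_zero_of_mem_pointIdeal {p : Fin N → K} {f : MvPolynomial (Fin N) K}
    (hf : f ∈ pointIdeal p) : eval p f = 0 :=
  (Ideal.span_le (I := RingHom.ker (eval p))).2 (fun _ hg => hg.2) hf

theorem mem_pointIdeal_single_of_eval_eq_zero {i : Fin N} {M : ℕ} {f : MvPolynomial (Fin N) K}
    (hf : f.IsHomogeneous M) (hfi : eval (Pi.single i 1) f = 0) :
    f ∈ pointIdeal (Pi.single i 1 : Fin N → K) := by
  obtain ⟨h, hh, hmem⟩ := exists_sub_X_pow_mul_mem_pointIdeal_single_pow i (r := M) (t := 0)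
    le_rfl hf
  rw [pow_one] at hmem
  obtain ⟨c, rfl⟩ : ∃ c, h = C c :=
    ⟨_, totalDegree_eq_zero_iff_eq_C.1 (Nat.le_zero.1 hh.totalDegree_le)⟩
  have hc : c = 0 := by simpa [hfi] using eval_eq_zero_of_mem_pointIdeal hmem
  simpa [hc] using hmem

theorem exists_dvd_sub_mem_pointIdeal_single_pow {i : Fin N} {M t k : ℕ} (hk : k ≤ t + 1)
    {G g : MvPolynomial (Fin N) K} (hG : G.IsHomogeneous M) (hGi : eval (Pi.single i 1) G = 1)
    (hg : g.IsHomogeneous (M * k + t)) :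
    ∃ f : MvPolynomial (Fin N) K, f.IsHomogeneous (M * k + t) ∧ G ∣ f ∧
      f - g ∈ pointIdeal (Pi.single i 1 : Fin N → K) ^ k := by
  -- `(X i ^ M) ^ k - (X i ^ M - G) ^ k` is a multiple of `G` congruent to `X i ^ (M * k)`.
  obtain ⟨h, hh, hgh⟩ := exists_sub_X_pow_mul_mem_pointIdeal_single_pow i hk hg
  have hX : (X i ^ M : MvPolynomial (Fin N) K).IsHomogeneous M := by
    simpa using (isHomogeneous_X K i).pow M
  have hD : X i ^ M - G ∈ pointIdeal (Pi.single i 1 : Fin N → K) :=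
    mem_pointIdeal_single_of_eval_eq_zero (hX.sub hG) (by simp [hGi])
  refine ⟨((X i ^ M) ^ k - (X i ^ M - G) ^ k) * h,
    ((hX.pow k).sub ((hX.sub hG).pow k)).mul hh, Dvd.dvd.mul_right ?_ h, ?_⟩
  · conv_lhs => rw [← sub_sub_cancel (X i ^ M) G]
    exact sub_dvd_pow_sub_pow _ _ k
  · have hsplit : ((X i ^ M) ^ k - (X i ^ M - G) ^ k) * h - g =
        -(g - X i ^ (M * k) * h) - (X i ^ M - G) ^ k * h := by ring
    rw [hsplit]
    exact sub_mem (neg_mem hgh) (Ideal.mul_mem_right _ _ (Ideal.pow_mem_pow hD k))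

theorem exists_dvd_sub_mem_pointIdeal_pow {p : Fin N → K} (hp : p ≠ 0) {M t k : ℕ}
    (hk : k ≤ t + 1) {G g : MvPolynomial (Fin N) K} (hG : G.IsHomogeneous M)
    (hGp : eval p G = 1) (hg : g.IsHomogeneous (M * k + t)) :
    ∃ f : MvPolynomial (Fin N) K, f.IsHomogeneous (M * k + t) ∧ G ∣ f ∧
      f - g ∈ pointIdeal p ^ k := by
  obtain ⟨i, -⟩ := Function.ne_iff.1 hp
  obtain ⟨A, rfl⟩ := exists_unit_mulVec_eq (v := Pi.single i 1) (by simp) hp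
  have hinv (f) : linSubst (A⁻¹).val (linSubst A.val f) = f := by
    rw [linSubst_linSubst, Units.mul_inv, linSubst_one]
  obtain ⟨f, hf, hGf, hfg⟩ := exists_dvd_sub_mem_pointIdeal_single_pow hk
    (isHomogeneous_linSubst A.val hG) ((eval_linSubst _ _ _).trans hGp)
    (isHomogeneous_linSubst A.val hg)
  refine ⟨linSubst (A⁻¹).val f, isHomogeneous_linSubst _ hf, ?_, ?_⟩
  · exact hinv G ▸ map_dvd _ hGf
  · rw [← linSubst_mem_pointIdeal_pow_iff, map_sub, linSubst_linSubst, Units.inv_mul, linSubst_one]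
    exact hfg

theorem exists_form_eval_eq_one_mem_pointIdeal_pow {p : Fin s → Fin N → K} (hp : ProjDistinct p)
    (m : Fin s → ℕ) (i : Fin s) :
    ∃ (M : ℕ) (G : MvPolynomial (Fin N) K), G.IsHomogeneous M ∧ eval (p i) G = 1 ∧
      ∀ j ≠ i, G ∈ pointIdeal (p j) ^ m j := by
  choose! L hL hLi hLj using fun j (hj : j ≠ i) =>
    exists_linearForm_eval_eq_one_eval_eq_zero (hp.2 i j hj.symm)
  refine ⟨∑ j ∈ Finset.univ.erase i, 1 * m j, ∏ j ∈ Finset.univ.erase i, L j ^ m j,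
    IsHomogeneous.prod _ _ _ fun j hj => (hL j (Finset.ne_of_mem_erase hj)).pow _, ?_, ?_⟩
  · rw [map_prod]
    exact Finset.prod_eq_one fun j hj => by
      rw [map_pow, hLi j (Finset.ne_of_mem_erase hj), one_pow]
  · intro j hj
    have hdvd : L j ^ m j ∣ ∏ j ∈ Finset.univ.erase i, L j ^ m j :=
      Finset.dvd_prod_of_mem _ (Finset.mem_erase.2 ⟨hj, Finset.mem_univ j⟩)
    have hmem : L j ∈ pointIdeal (p j) := Ideal.subset_span ⟨hL j hj, hLj j hj⟩
    exact Ideal.mem_of_dvd _ hdvd (Ideal.pow_mem_pow hmem _)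

theorem eventually_separatedInDegree {p : Fin s → Fin N → K} (hp : ProjDistinct p)
    (m : Fin s → ℕ) :
    ∀ᶠ t in Filter.atTop, SeparatedInDegree (fun i => pointIdeal (p i) ^ m i) t := by
  refine Filter.eventually_all.2 fun i => ?_
  obtain ⟨M, G, hG, hGi, hGj⟩ := exists_form_eval_eq_one_mem_pointIdeal_pow hp m i
  filter_upwards [Filter.eventually_ge_atTop (M * m i + m i)] with t ht g hg
  obtain ⟨u, rfl⟩ := Nat.exists_eq_add_of_le (le_of_add_le_left ht)
  obtain ⟨f, hf, hGf, hfg⟩ := exists_dvd_sub_mem_pointIdeal_pow (hp.1 i) (by omega) hG hGi hg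
  exact ⟨f, hf, hfg, fun j hj => Ideal.mem_of_dvd _ hGf (hGj j hj)⟩

end Separation

section LowerBound

variable {K : Type} [Field K] {N s : ℕ}

theorem coeff_eq_zero_of_mem_pointIdeal_single_pow {i : Fin N} {k : ℕ}
    {f : MvPolynomial (Fin N) K} (hf : f ∈ pointIdeal (Pi.single i 1 : Fin N → K) ^ k)
    {d : Fin N →₀ ℕ} (hd : (d.erase i).degree < k) : coeff d f = 0 :=
  notMem_support_iff.1 fun hmem => (mem_pointIdeal_single_pow_iff.1 hf d hmem).not_gt hd

theorem X_pow_mul_X_pow_notMem_sup {a b k l : ℕ} (hk : k < a) (hl : l < b) :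
    (X 0 ^ l * X 1 ^ k : MvPolynomial (Fin 2) K) ∉
      pointIdeal (Pi.single 0 1) ^ a ⊔ pointIdeal (Pi.single 1 1) ^ b := by
  intro hmem
  obtain ⟨u, hu, v, hv, huv⟩ := Submodule.mem_sup.1 hmem
  let d : Fin 2 →₀ ℕ := Finsupp.single 0 l + Finsupp.single 1 k
  have hu0 : coeff d u = 0 := coeff_eq_zero_of_mem_pointIdeal_single_pow hu (by simp [d, hk])
  have hv0 : coeff d v = 0 := coeff_eq_zero_of_mem_pointIdeal_single_pow hv (by simp [d, hl])
  have hone : coeff d (X 0 ^ l * X 1 ^ k : MvPolynomial (Fin 2) K) = 1 := by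
    rw [X_pow_eq_monomial, X_pow_eq_monomial, monomial_mul, coeff_monomial, if_pos rfl, one_mul]
  rw [← huv, coeff_add, hu0, hv0, add_zero] at hone
  exact zero_ne_one hone

-- Restrict to the line through `p` and `q`, with `p` and `q` as its coordinate points.
theorem linearForm_pow_mul_pow_notMem_sup {p q : Fin N → K} {L L' : MvPolynomial (Fin N) K}
    (hL : L.IsHomogeneous 1) (hLp : eval p L = 1) (hLq : eval q L = 0)
    (hL' : L'.IsHomogeneous 1) (hLp' : eval p L' = 0) (hLq' : eval q L' = 1) {a b k l : ℕ}
    (hk : k < a) (hl : l < b) : L ^ l * L' ^ k ∉ pointIdeal p ^ a ⊔ pointIdeal q ^ b := by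
  let A : Matrix (Fin N) (Fin 2) K := (Matrix.of ![p, q]).transpose
  have hAp : A.mulVec (Pi.single 0 1) = p := A.mulVec_single_one 0
  have hAq : A.mulVec (Pi.single 1 1) = q := A.mulVec_single_one 1
  have hX : linSubst A L = X 0 := by
    rw [eq_sum_eval_single_smul_X (isHomogeneous_linSubst A hL), Fin.sum_univ_two, eval_linSubst,
      eval_linSubst, hAp, hAq, hLp, hLq, one_smul, zero_smul, add_zero]
  have hX' : linSubst A L' = X 1 := by
    rw [eq_sum_eval_single_smul_X (isHomogeneous_linSubst A hL'), Fin.sum_univ_two, eval_linSubst,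
      eval_linSubst, hAp, hAq, hLp', hLq', one_smul, zero_smul, zero_add]
  intro hmem
  obtain ⟨u, hu, v, hv, huv⟩ := Submodule.mem_sup.1 hmem
  refine X_pow_mul_X_pow_notMem_sup (K := K) hk hl ?_
  rw [← hX, ← hX', ← map_pow, ← map_pow, ← map_mul, ← huv, map_add]
  exact Submodule.add_mem_sup (linSubst_mem_pointIdeal_pow A (hAp ▸ hu))
    (linSubst_mem_pointIdeal_pow A (hAq ▸ hv))

theorem add_sub_one_le_of_separatedInDegree {p : Fin s → Fin N → K} (hp : ProjDistinct p)
    {m : Fin s → ℕ} {t : ℕ} (hsep : SeparatedInDegree (fun i => pointIdeal (p i) ^ m i) t)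
    (hm : ∀ i, m i ≤ t + 1) {i j : Fin s} (hij : i ≠ j) : m i + m j - 1 ≤ t := by
  by_contra! hlt
  have hi := hm i
  have hj := hm j
  obtain ⟨L, hL, hLi, hLj⟩ := exists_linearForm_eval_eq_one_eval_eq_zero (hp.2 i j hij)
  obtain ⟨L', hL', hLj', hLi'⟩ := exists_linearForm_eval_eq_one_eval_eq_zero (hp.2 j i hij.symm)
  have hdeg : 1 * (t - (m i - 1)) + 1 * (m i - 1) = t := by omega
  have hhom := hdeg ▸ (hL.pow (t - (m i - 1))).mul (hL'.pow (m i - 1))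
  obtain ⟨f, -, hfi, hfj⟩ := hsep i _ hhom
  refine linearForm_pow_mul_pow_notMem_sup hL hLi hLj hL' hLi' hLj'
    (a := m i) (b := m j) (k := m i - 1) (l := t - (m i - 1)) (by omega) (by omega) ?_
  rw [← sub_sub_cancel f (L ^ _ * _), sub_eq_neg_add]
  exact Submodule.add_mem_sup (neg_mem hfi) (hfj j hij.symm)

end LowerBound

theorem ProjDistinct.dim_ne_zero {K : Type} [Field K] {n s : ℕ} {p : Fin s → Fin (n + 1) → K}
    (hp : ProjDistinct p) {i j : Fin s} (hij : i ≠ j) : n ≠ 0 := by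
  rintro rfl
  obtain ⟨k, hk⟩ := Function.ne_iff.1 (hp.1 j)
  refine hp.2 i j hij (p i k / p j k) (funext fun l => ?_)
  obtain rfl : l = k := Fin.ext (by omega)
  rw [Pi.smul_apply, smul_eq_mul, div_mul_cancel₀ _ hk]

theorem stmt2_general {K : Type} [Field K] {n s : ℕ} (p : Fin s → Fin (n + 1) → K)
    (hdist : ProjDistinct p) (m : Fin s → ℕ) {i j : Fin s} (hij : i ≠ j) :
    m i + m j - 1 ≤ regFat K p m := by
  obtain ⟨k, rfl⟩ := Nat.exists_eq_succ_of_ne_zero (hdist.dim_ne_zero hij)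
  have hiff := hilbFn_fatIdeal_eq_fatMult_iff hdist.1 m
  have hlarge : ∀ᶠ t in Filter.atTop, ∀ i, m i ≤ t + 1 :=
    Filter.eventually_all.2 fun i =>
      (Filter.eventually_ge_atTop (m i)).mono fun _ => Nat.le_succ_of_le
  obtain ⟨t, ht⟩ := ((eventually_separatedInDegree hdist m).and hlarge).exists
  refine le_csInf ⟨t, (hiff t).2 ht⟩ fun u hu => ?_
  obtain ⟨hsep, hm⟩ := (hiff u).1 hu
  exact add_sub_one_le_of_separatedInDegree hdist hsep hm hij

/-- Lemma 2.3 (CTV): `reg(R/I) ≥ m₁ + m₂ - 1`. -/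
theorem stmt2 {K : Type} [Field K] [IsAlgClosed K] {n s : ℕ} (hs : 2 ≤ s)
    (p : Fin s → Fin (n + 1) → K) (hdist : ProjDistinct p)
    (m : Fin s → ℕ) (hpos : ∀ i, 0 < m i)
    (hmono : ∀ i j : Fin s, i ≤ j → m j ≤ m i) :
    m ⟨0, by omega⟩ + m ⟨1, by omega⟩ - 1 ≤ regFat K p m :=
  stmt2_general p hdist m (by simp)
end
end

section
/- Let Z = 2P_1 + ... + 2P_{n+3} be a set of n+3 non-degenerate double points in P^n (P_1,...,P_{n+3} span P^n). Then reg(Z) = T(Z), where T(Z) = max{T_j(Z) : j=1,...,n} and T_j(Z) = max{⌊(2q + j - 2)/j⌋ : some q of the points lie on a j-dimensional linear subspace}. -/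
open MvPolynomial

noncomputable section

/-!
Since `reg(Z)` is the least degree in which `Z` imposes independent conditions on forms, the claim
is that this happens in degree `t` exactly when `t ≥ T(Z)`.

If `t ≥ T(Z)`, project from one of the points, `P`. The other points, each taken twice, together
with one further vector satisfy the numerical condition of the Rado–Horn theorem, so they fall into
`t` linearly independent classes. A class lies on a hyperplane that may be chosen through `P` or
off `P`, and the product of `t` such hyperplanes is a form of degree `t` singular at all other
points. These products realise every jet at `P`.

If `Z` imposes independent conditions in degree `t`, so do the double points on any linear subspace,
and counting dimensions there bounds their number by Segre's condition, with two exceptions in which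
the count is not sharp. Five double points in a plane are singular on the double conic through them,
so they are not separated by quartics. Seven double points in `ℙ⁴` are not separated by cubics: a
cubic singular at the five coordinate points becomes a quadratic form under the Cremona
transformation, and the symmetry of its polar form is a relation between the jets at the two
remaining points.
-/

section Rado

open Finset

variable {K V ι : Type*} [DivisionRing K] [AddCommGroup V] [Module K V]

lemma finrank_union_add_finrank_inter_le {s t : Set V} (hs : s.Finite) (ht : t.Finite) :
    Set.finrank K (s ∪ t) + Set.finrank K (s ∩ t) ≤ Set.finrank K s + Set.finrank K t := by
  have := FiniteDimensional.span_of_finite K hs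
  have := FiniteDimensional.span_of_finite K ht
  have h_inter : Submodule.span K (s ∩ t) ≤ Submodule.span K s ⊓ Submodule.span K t :=
    le_inf (Submodule.span_mono Set.inter_subset_left) (Submodule.span_mono Set.inter_subset_right)
  unfold Set.finrank
  rw [Submodule.span_union,
    ← Submodule.finrank_sup_add_finrank_inf_eq (Submodule.span K s) (Submodule.span K t)]
  exact Nat.add_le_add_left (Submodule.finrank_mono h_inter) _

lemma finrank_mono_of_finite {s t : Set V} (ht : t.Finite) (hst : s ⊆ t) :
    Set.finrank K s ≤ Set.finrank K t :=
  have := FiniteDimensional.span_of_finite K ht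
  Submodule.finrank_mono (Submodule.span_mono hst)

/-- Rado's condition on a family of finite sets of vectors: any `r` of the sets together span a
space of dimension at least `r`. It is the linear analogue of Hall's condition. -/
def RadoCondition (K : Type*) {V ι : Type*} [DivisionRing K] [AddCommGroup V] [Module K V]
    (S : ι → Finset V) : Prop :=
  ∀ A : Finset ι, #A ≤ Set.finrank K (⋃ i ∈ A, (S i : Set V))

namespace RadoCondition

variable {S : ι → Finset V}

lemma nonempty (hS : RadoCondition K S) (i : ι) : (S i).Nonempty := by
  by_contra! h
  have := hS {i}
  simp [h] at this

lemma linearIndependent [Finite ι] {f : ι → V} (hf : RadoCondition K fun i => {f i}) :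
    LinearIndependent K f := by
  have := Fintype.ofFinite ι
  rw [linearIndependent_iff_card_le_finrank_span]
  simpa using hf univ

lemma exists_finrank_le_card [DecidableEq ι] [DecidableEq V] (hS : RadoCondition K S) {i : ι}
    {c : V} (h : ¬ RadoCondition K (Function.update S i ((S i).erase c))) :
    ∃ A : Finset ι, i ∉ A ∧
      Set.finrank K ((⋃ j ∈ A, (S j : Set V)) ∪ ((S i).erase c : Set V)) ≤ #A := by
  simp only [RadoCondition, not_forall, not_le] at h
  obtain ⟨A, hA⟩ := h
  have update_of_mem {B : Finset ι} (hB : i ∉ B) :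
      ⋃ j ∈ B, (Function.update S i ((S i).erase c) j : Set V) = ⋃ j ∈ B, (S j : Set V) :=
    Set.iUnion₂_congr fun j hj => by rw [Function.update_of_ne (ne_of_mem_of_not_mem hj hB)]
  have hiA : i ∈ A := by
    by_contra hiA
    rw [update_of_mem hiA] at hA
    exact hA.not_ge (hS A)
  refine ⟨A.erase i, notMem_erase i A, ?_⟩
  rw [← insert_erase hiA, set_biUnion_insert, update_of_mem (notMem_erase i A),
    Function.update_self, Set.union_comm, card_insert_of_notMem (notMem_erase i A)] at hA
  exact Nat.lt_succ_iff.1 hA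

/-- If both shrunken families violated Rado's condition, submodularity of the rank would make the
original family violate it as well. -/
lemma update_erase_or [DecidableEq ι] [DecidableEq V] (hS : RadoCondition K S) {i : ι} {c d : V}
    (hcd : c ≠ d) :
    RadoCondition K (Function.update S i ((S i).erase c)) ∨
      RadoCondition K (Function.update S i ((S i).erase d)) := by
  by_contra! ⟨hc, hd⟩
  obtain ⟨A, hiA, hA⟩ := hS.exists_finrank_le_card hc
  obtain ⟨B, hiB, hB⟩ := hS.exists_finrank_le_card hd
  set X : Set V := (⋃ j ∈ A, (S j : Set V)) ∪ ((S i).erase c : Set V)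
  set Y : Set V := (⋃ j ∈ B, (S j : Set V)) ∪ ((S i).erase d : Set V)
  have hX : X.Finite :=
    (A.finite_toSet.biUnion fun j _ => (S j).finite_toSet).union (finite_toSet _)
  have hY : Y.Finite :=
    (B.finite_toSet.biUnion fun j _ => (S j).finite_toSet).union (finite_toSet _)
  have h_union : #(insert i (A ∪ B)) ≤ Set.finrank K (X ∪ Y) := by
    refine (hS _).trans (finrank_mono_of_finite (hX.union hY) fun v hv => ?_)
    simp only [X, Y, Set.mem_iUnion, Set.mem_union, exists_prop, mem_coe, mem_erase, mem_insert,
      mem_union] at hv ⊢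
    grind
  have h_inter : #(A ∩ B) ≤ Set.finrank K (X ∩ Y) := by
    refine (hS _).trans (finrank_mono_of_finite (hX.inter_of_left Y) fun v hv => ?_)
    simp only [X, Y, Set.mem_iUnion, Set.mem_inter_iff, Set.mem_union, exists_prop, mem_coe,
      mem_inter] at hv ⊢
    grind
  have h_submodular := finrank_union_add_finrank_inter_le (K := K) hX hY
  rw [card_insert_of_notMem (by simp [hiA, hiB])] at h_union
  have := card_union_add_card_inter A B
  omega

theorem exists_linearIndependent [Finite ι] (hS : RadoCondition K S) :
    ∃ f : ι → V, (∀ i, f i ∈ S i) ∧ LinearIndependent K f := by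
  classical
  have := Fintype.ofFinite ι
  induction hm : ∑ i, #(S i) using Nat.strong_induction_on generalizing S with
  | _ m ih =>
  by_cases h_single : ∀ i, #(S i) ≤ 1
  · choose f hf using fun i => card_eq_one.1 (le_antisymm (h_single i) (hS.nonempty i).card_pos)
    obtain rfl : S = fun i => {f i} := funext hf
    exact ⟨f, fun i => mem_singleton_self _, hS.linearIndependent⟩
  · push Not at h_single
    obtain ⟨i, hi⟩ := h_single
    obtain ⟨c, hc, d, hd, hcd⟩ := one_lt_card.1 hi
    obtain ⟨e, he, hSe⟩ : ∃ e ∈ S i, RadoCondition K (Function.update S i ((S i).erase e)) :=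
      (hS.update_erase_or hcd).elim (⟨c, hc, ·⟩) (⟨d, hd, ·⟩)
    have h_subset : Function.update S i ((S i).erase e) ≤ S :=
      update_le_self_iff.2 (erase_subset e (S i))
    have h_card : ∑ j, #(Function.update S i ((S i).erase e) j) < m :=
      hm ▸ sum_lt_sum (fun j _ => card_le_card (h_subset j))
        ⟨i, mem_univ i, by simpa using card_lt_card (erase_ssubset he)⟩
    obtain ⟨f, hfS, hf⟩ := ih _ h_card hSe rfl
    exact ⟨f, fun j => h_subset j (hfS j), hf⟩

end RadoCondition

lemma mul_finrank_le_finrank_iUnion_single {s : Set V} (hs : s.Finite) (k : ℕ) :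
    k * Set.finrank K s ≤
      Set.finrank K (⋃ v ∈ s, Set.range fun c => (Pi.single c v : Fin k → V)) := by
  have := FiniteDimensional.span_of_finite K hs
  have := FiniteDimensional.span_of_finite K
    (hs.biUnion fun v _ => Set.finite_range fun c => (Pi.single c v : Fin k → V))
  let T := Submodule.span K (⋃ v ∈ s, Set.range fun c => (Pi.single c v : Fin k → V))
  have h_single (c : Fin k) : Submodule.span K s ≤ T.comap (LinearMap.single K (fun _ => V) c) :=
    Submodule.span_le.2 fun v hv => Submodule.subset_span (Set.mem_biUnion hv ⟨c, rfl⟩)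
  have h_range : LinearMap.range ((Submodule.span K s).subtype.compLeft (Fin k)) ≤ T := by
    rintro _ ⟨y, rfl⟩
    rw [← Finset.univ_sum_single (LinearMap.compLeft _ _ y)]
    exact Submodule.sum_mem _ fun c _ => h_single c (y c).2
  have h_inj : Function.Injective ((Submodule.span K s).subtype.compLeft (Fin k)) :=
    Function.Injective.comp_left Subtype.val_injective
  calc k * Set.finrank K s = Module.finrank K (Fin k → Submodule.span K s) := by
        simp [Module.finrank_pi_fintype, Set.finrank]
    _ = _ := (LinearMap.finrank_range_of_inj h_inj).symm
    _ ≤ _ := Submodule.finrank_mono h_range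

/-- The Rado–Horn theorem: choose the colour `f i` so that the vectors `w i`, placed in the
`f i`-th summand of `Fin k → V`, become independent. -/
theorem exists_coloring_linearIndepOn [Finite ι] (w : ι → V) (k : ℕ)
    (h : ∀ A : Finset ι, #A ≤ k * Set.finrank K (w '' A)) :
    ∃ f : ι → Fin k, ∀ c, LinearIndepOn K w {i | f i = c} := by
  classical
  let S (i : ι) : Finset (Fin k → V) := univ.image fun c => Pi.single c (w i)
  have hS : RadoCondition K S := fun A => by
    simpa [S] using (h A).trans
      (mul_finrank_le_finrank_iUnion_single (A.finite_toSet.image w) k)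
  obtain ⟨g, hgS, hg⟩ := hS.exists_linearIndependent
  choose f hf using fun i => by simpa [S] using hgS i
  refine ⟨f, fun c => ?_⟩
  have h_indep : LinearIndepOn K g {i | f i = c} := hg.comp _ Subtype.val_injective
  have h_comp : Set.EqOn g (LinearMap.single K (fun _ => V) c ∘ w) {i | f i = c} := by
    rintro i rfl
    exact (hf i).symm
  exact .of_comp _ ((linearIndepOn_congr h_comp).1 h_indep)

end Rado

section Jets

variable {K σ : Type*} [Field K]

instance finiteDimensional_homogeneousSubmodule [Finite σ] (t : ℕ) :
    FiniteDimensional K (homogeneousSubmodule σ K t) :=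
  Module.Finite.iff_fg.2 (homogeneousSubmodule_fg σ K t)

/-- The Euler relation between value `c` and differential `φ` of a form of degree `t` at `P`:
`eulerForm t P (c, φ) = φ P - t c`. -/
def eulerForm (t : ℕ) (P : σ → K) : K × Module.Dual K (σ → K) →ₗ[K] K :=
  Module.Dual.eval K (σ → K) P ∘ₗ LinearMap.snd K K _ - (t : K) • LinearMap.fst K K _

@[simp]
lemma eulerForm_apply (t : ℕ) (P : σ → K) (x : K × Module.Dual K (σ → K)) :
    eulerForm t P x = x.2 P - t * x.1 := by
  simp [eulerForm]

lemma eulerForm_surjective (t : ℕ) {P : σ → K} (hP : P ≠ 0) :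
    Function.Surjective (eulerForm t P) := fun c => by
  obtain ⟨k, hk⟩ := Function.ne_iff.1 hP
  exact ⟨(0, (c / P k) • LinearMap.proj k), by simp [div_mul_cancel₀ c hk]⟩

variable [Fintype σ]

/-- The differential at `P` of the polynomial function `F`, as a linear form on tangent vectors. -/
def differential (P : σ → K) : MvPolynomial σ K →ₗ[K] Module.Dual K (σ → K) where
  toFun F := ∑ k, eval P (pderiv k F) • LinearMap.proj k
  map_add' F G := by simp [add_smul, Finset.sum_add_distrib]
  map_smul' c F := by simp [smul_eval, mul_smul, Finset.smul_sum]

lemma differential_apply (P : σ → K) (F : MvPolynomial σ K) (v : σ → K) :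
    differential P F v = ∑ k, eval P (pderiv k F) * v k := by
  simp [differential]

lemma differential_apply_single [DecidableEq σ] (P : σ → K) (F : MvPolynomial σ K) (k : σ) :
    differential P F (Pi.single k 1) = eval P (pderiv k F) := by
  simp [differential_apply, Pi.single_apply]

@[simp]
lemma differential_C (P : σ → K) (c : K) : differential P (C c) = 0 := by
  ext; simp [differential_apply]

@[simp]
lemma differential_X (P : σ → K) (k : σ) : differential P (X k) = LinearMap.proj k := by
  classical
  ext; simp [differential_apply, pderiv_X, Pi.single_apply]

lemma differential_mul (P : σ → K) (F G : MvPolynomial σ K) :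
    differential P (F * G) = eval P F • differential P G + eval P G • differential P F := by
  ext
  simp only [differential_apply, LinearMap.add_apply, LinearMap.smul_apply, smul_eq_mul,
    Finset.mul_sum, ← Finset.sum_add_distrib, pderiv_mul, map_add, map_mul]
  exact Finset.sum_congr rfl fun _ _ => by ring

/-- The first order jet of `F` at `P`: its value together with its differential. -/
def jet (P : σ → K) : MvPolynomial σ K →ₗ[K] K × Module.Dual K (σ → K) :=
  (aeval P).toLinearMap.prod (differential P)

@[simp]
lemma jet_apply (P : σ → K) (F : MvPolynomial σ K) : jet P F = (eval P F, differential P F) := by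
  simp [jet]

lemma jet_eq_zero_iff {P : σ → K} {F : MvPolynomial σ K} :
    jet P F = 0 ↔ eval P F = 0 ∧ ∀ k, eval P (pderiv k F) = 0 := by
  classical
  rw [jet_apply, Prod.mk_eq_zero]
  refine and_congr_right fun _ => ⟨fun h k => ?_, fun h => ?_⟩
  · rw [← differential_apply_single, h, LinearMap.zero_apply]
  · ext; simp [differential_apply, h]

lemma jet_mul_eq_zero {P : σ → K} {F G : MvPolynomial σ K} (hF : eval P F = 0)
    (hG : eval P G = 0) : jet P (F * G) = 0 := by
  simp [differential_mul, hF, hG]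

lemma eulerForm_jet {t : ℕ} {F : MvPolynomial σ K} (hF : F.IsHomogeneous t) (P : σ → K) :
    eulerForm t P (jet P F) = 0 := by
  have := congrArg (eval P) hF.sum_X_mul_pderiv
  simp only [map_sum, map_mul, eval_X, nsmul_eq_mul, map_natCast] at this
  simp [differential_apply, ← this, mul_comm]

variable {ι : Type*}

/-- The double points supported at the `p i` impose independent conditions on forms of degree `t`:
every family of jets allowed by the Euler relations is cut out by one form. -/
def SeparatesJets (p : ι → σ → K) (t : ℕ) : Prop :=
  ∀ x : ι → K × Module.Dual K (σ → K), (∀ i, eulerForm t (p i) (x i) = 0) →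
    ∃ F : MvPolynomial σ K, F.IsHomogeneous t ∧ ∀ i, jet (p i) F = x i

/-- The map sending a form of degree `t` to its jets at the points `p i`. -/
def jetMap (p : ι → σ → K) (t : ℕ) :
    homogeneousSubmodule σ K t →ₗ[K] ι → K × Module.Dual K (σ → K) :=
  LinearMap.pi fun i => jet (p i) ∘ₗ (homogeneousSubmodule σ K t).subtype

/-- The map whose kernel is the space of families of jets satisfying the Euler relations. -/
def eulerMap (p : ι → σ → K) (t : ℕ) : (ι → K × Module.Dual K (σ → K)) →ₗ[K] ι → K :=
  LinearMap.pi fun i => eulerForm t (p i) ∘ₗ LinearMap.proj i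

lemma range_jetMap_le (p : ι → σ → K) (t : ℕ) :
    LinearMap.range (jetMap p t) ≤ LinearMap.ker (eulerMap p t) := by
  rintro _ ⟨F, rfl⟩
  exact funext fun i => eulerForm_jet F.2 (p i)

lemma separatesJets_iff_range_eq {p : ι → σ → K} {t : ℕ} :
    SeparatesJets p t ↔ LinearMap.range (jetMap p t) = LinearMap.ker (eulerMap p t) := by
  refine ⟨fun h => (range_jetMap_le p t).antisymm fun x hx => ?_, fun h x hx => ?_⟩
  · obtain ⟨F, hF, hFx⟩ := h x (congrFun hx)
    exact ⟨⟨F, hF⟩, funext hFx⟩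
  · obtain ⟨F, hFx⟩ : x ∈ LinearMap.range (jetMap p t) := h ▸ funext hx
    exact ⟨F, F.2, congrFun hFx⟩

lemma finrank_ker_eulerMap [Fintype ι] {p : ι → σ → K} (hp : ∀ i, p i ≠ 0) (t : ℕ) :
    Module.finrank K (LinearMap.ker (eulerMap p t)) = Fintype.card ι * Fintype.card σ := by
  have h_surj : Function.Surjective (eulerMap p t) :=
    Function.Surjective.piMap fun i => eulerForm_surjective t (hp i)
  have h_rank := LinearMap.finrank_range_add_finrank_ker (eulerMap p t)
  rw [LinearMap.range_eq_top.2 h_surj, finrank_top] at h_rank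
  simp only [Module.finrank_fintype_fun_eq_card, Module.finrank_pi_fintype, Module.finrank_prod,
    Subspace.dual_finrank_eq, Module.finrank_self, Finset.sum_const, Finset.card_univ,
    smul_eq_mul] at h_rank
  linarith

lemma finrank_homogeneousSubmodule (t : ℕ) :
    Module.finrank K (homogeneousSubmodule σ K t) = (Fintype.card σ + t - 1).choose t := by
  classical
  have h_support : {d : σ →₀ ℕ | d.degree = t} =
      ↑(Finset.univ.finsuppAntidiag t : Finset (σ →₀ ℕ)) := by
    ext d
    simp [Finset.mem_finsuppAntidiag, Finsupp.degree_eq_sum]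
  have h_eq : homogeneousSubmodule σ K t = restrictSupport K {d : σ →₀ ℕ | d.degree = t} :=
    homogeneousSubmodule_eq_finsupp_supported σ K t
  rw [h_eq, Module.finrank_eq_nat_card_basis (basisRestrictSupport K _), h_support,
    Nat.card_coe_set_eq, Set.ncard_coe_finset, Finset.card_finsuppAntidiag_nat_eq_choose,
    Finset.card_univ]

namespace SeparatesJets

variable [Fintype ι] {p : ι → σ → K} {t : ℕ}

lemma card_mul_add_finrank_ker (h : SeparatesJets p t) (hp : ∀ i, p i ≠ 0) :
    Fintype.card ι * Fintype.card σ + Module.finrank K (LinearMap.ker (jetMap p t)) =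
      (Fintype.card σ + t - 1).choose t := by
  rw [← finrank_ker_eulerMap hp t, ← separatesJets_iff_range_eq.1 h,
    LinearMap.finrank_range_add_finrank_ker, finrank_homogeneousSubmodule]

lemma card_mul_le (h : SeparatesJets p t) (hp : ∀ i, p i ≠ 0) :
    Fintype.card ι * Fintype.card σ ≤ (Fintype.card σ + t - 1).choose t :=
  Nat.le.intro (h.card_mul_add_finrank_ker hp)

lemma eq_zero_of_jet_eq_zero (h : SeparatesJets p t) (hp : ∀ i, p i ≠ 0)
    (h_card : (Fintype.card σ + t - 1).choose t ≤ Fintype.card ι * Fintype.card σ)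
    {F : MvPolynomial σ K} (hF : F.IsHomogeneous t) (hF0 : ∀ i, jet (p i) F = 0) : F = 0 := by
  have h_ker : LinearMap.ker (jetMap p t) = ⊥ := by
    rw [← Submodule.finrank_eq_zero (R := K)]
    have := h.card_mul_add_finrank_ker hp
    omega
  exact congrArg Subtype.val (LinearMap.ker_eq_bot'.1 h_ker ⟨F, hF⟩ (funext hF0))

end SeparatesJets

end Jets

section LinearAlgebra

variable {K V ι : Type*} [Field K] [AddCommGroup V] [Module K V]

lemma exists_dual_apply_eq {u : ι → V} {S : Set ι} (hu : LinearIndepOn K u S) (b : ι → K) :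
    ∃ g : Module.Dual K V, ∀ o ∈ S, g (u o) = b o := by
  obtain ⟨l, hl⟩ := (Finsupp.linearCombination K fun o : S => u o).exists_leftInverse_of_injective
    (LinearMap.ker_eq_bot.2 hu)
  refine ⟨Finsupp.linearCombination K (fun o : S => b o) ∘ₗ l, fun o ho => ?_⟩
  have hlo : l (u o) = Finsupp.single ⟨o, ho⟩ 1 := by
    simpa using LinearMap.congr_fun hl (Finsupp.single ⟨o, ho⟩ 1)
  simp [hlo]

lemma exists_dual_apply_eq_of_mkQ {u : ι → V} {S : Set ι} {P : V} (hP : P ≠ 0)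
    (hu : LinearIndepOn K (fun o => (K ∙ P).mkQ (u o)) S) (a : K) (b : ι → K) :
    ∃ g : Module.Dual K V, g P = a ∧ ∀ o ∈ S, g (u o) = b o := by
  obtain ⟨g₀, hg₀⟩ :=
    exists_dual_apply_eq (LinearIndepOn.singleton (i := P) (v := id) hP) fun _ => a
  obtain ⟨h, hh⟩ := exists_dual_apply_eq hu fun o => b o - g₀ (u o)
  refine ⟨g₀ + h ∘ₗ (K ∙ P).mkQ, ?_, fun o ho => ?_⟩
  · have hP_mkQ : (K ∙ P).mkQ P = 0 := by simp
    simpa [hP_mkQ] using hg₀ P rfl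
  · simpa using congrArg (g₀ (u o) + ·) (hh o ho)

lemma finrank_le_finrank_image_mkQ_add_one {s : Set V} (hs : s.Finite) (P : V) :
    Set.finrank K s ≤ Set.finrank K ((K ∙ P).mkQ '' s) + 1 := by
  have := FiniteDimensional.span_of_finite K hs
  have := FiniteDimensional.span_of_finite K (hs.image (K ∙ P).mkQ)
  let π := (K ∙ P).mkQ.domRestrict (Submodule.span K s)
  have h_range : Module.finrank K (LinearMap.range π) = Set.finrank K ((K ∙ P).mkQ '' s) := by
    rw [LinearMap.range_domRestrict, Submodule.map_span, Set.finrank]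
  have h_ker : Module.finrank K (LinearMap.ker π) ≤ 1 := by
    have h_map : (LinearMap.ker π).map (Submodule.span K s).subtype ≤ K ∙ P := by
      rintro _ ⟨v, hv, rfl⟩
      simpa [π] using hv
    rw [← Submodule.finrank_map_subtype_eq]
    exact (Submodule.finrank_mono h_map).trans (finrank_span_le_card {P} |>.trans_eq (by simp))
  have h_rank := LinearMap.finrank_range_add_finrank_ker π
  rw [h_range] at h_rank
  exact h_rank.symm.trans_le (Nat.add_le_add_left h_ker _)

lemma exists_apply_eq_mul_add [FiniteDimensional K V] (ℓ : Module.Dual K (K × Module.Dual K V)) :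
    ∃ (a : K) (v : V), ∀ x, ℓ x = a * x.1 + x.2 v := by
  refine ⟨ℓ (1, 0), (Module.evalEquiv K V).symm (ℓ ∘ₗ LinearMap.inr K K _), fun ⟨c, φ⟩ => ?_⟩
  rw [show (c, φ) = c • (1, 0) + (0, φ) by simp, map_add, map_smul]
  simp [Module.apply_evalEquiv_symm_apply, mul_comm]

lemma finrank_le_card_of_apply_eq_zero {σ : Type*} [Finite σ] {s : Set (σ → K)}
    {S : Finset σ} (hs : ∀ v ∈ s, ∀ k ∉ S, v k = 0) : Set.finrank K s ≤ S.card := by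
  classical
  have := Fintype.ofFinite σ
  have h_le : Submodule.span K s ≤
      Submodule.span K (S.image fun k => (Pi.single k 1 : σ → K) : Finset (σ → K)) := by
    refine Submodule.span_le.2 fun v hv => ?_
    rw [← Finset.univ_sum_single v]
    refine Submodule.sum_mem _ fun k _ => ?_
    by_cases hk : k ∈ S
    · rw [← mul_one (v k), ← smul_eq_mul, Pi.single_smul]
      exact Submodule.smul_mem _ _ (Submodule.subset_span (Finset.mem_image_of_mem _ hk))
    · simp [hs v hv k hk]
  exact (Submodule.finrank_mono h_le).trans
    ((finrank_span_finset_le_card _).trans Finset.card_image_le)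

end LinearAlgebra

section LinearForms

variable {K σ : Type*} [Field K] [Fintype σ] [DecidableEq σ]

/-- The linear form `g` as a homogeneous polynomial. -/
def linForm (g : Module.Dual K (σ → K)) : MvPolynomial σ K :=
  ∑ k, g (Pi.single k 1) • X k

lemma linForm_isHomogeneous (g : Module.Dual K (σ → K)) : (linForm g).IsHomogeneous 1 :=
  Submodule.sum_mem (homogeneousSubmodule σ K 1) fun k _ =>
    Submodule.smul_mem _ _ (isHomogeneous_X K k)

lemma sum_apply_single_smul_proj (g : Module.Dual K (σ → K)) :
    ∑ k, g (Pi.single k 1) • (LinearMap.proj k : Module.Dual K (σ → K)) = g :=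
  LinearMap.pi_ext' fun k => LinearMap.ext_ring (by simp [Pi.single_apply])

@[simp]
lemma eval_linForm (P : σ → K) (g : Module.Dual K (σ → K)) : eval P (linForm g) = g P := by
  simpa [linForm, smul_eval] using LinearMap.congr_fun (sum_apply_single_smul_proj g) P

@[simp]
lemma differential_linForm (P : σ → K) (g : Module.Dual K (σ → K)) :
    differential P (linForm g) = g := by
  simp [linForm, sum_apply_single_smul_proj]

lemma prod_linForm_isHomogeneous {T : ℕ} (g : Fin T → Module.Dual K (σ → K)) :
    (∏ c, linForm (g c)).IsHomogeneous T := by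
  simpa using IsHomogeneous.prod Finset.univ _ (fun _ => 1) fun c _ => linForm_isHomogeneous (g c)

lemma jet_prod_linForm_eq_zero {T : ℕ} {g : Fin T → Module.Dual K (σ → K)} {P : σ → K}
    {a b : Fin T} (hab : a ≠ b) (ha : g a P = 0) (hb : g b P = 0) :
    jet P (∏ c, linForm (g c)) = 0 := by
  rw [← Finset.mul_prod_erase _ _ (Finset.mem_univ a)]
  refine jet_mul_eq_zero (by simpa using ha) ?_
  rw [map_prod]
  exact Finset.prod_eq_zero (Finset.mem_erase.2 ⟨hab.symm, Finset.mem_univ b⟩) (by simpa using hb)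

lemma differential_prod_linForm {T : ℕ} {g : Fin T → Module.Dual K (σ → K)} {P : σ → K}
    {a : Fin T} (ha : g a P = 0) :
    differential P (∏ c, linForm (g c)) = (∏ c ∈ Finset.univ.erase a, g c P) • g a := by
  rw [← Finset.mul_prod_erase _ _ (Finset.mem_univ a)]
  simp [differential_mul, ha, map_prod]

end LinearForms

section SegreCondition

variable {K V ι : Type*} [Field K] [AddCommGroup V] [Module K V]

/-- Segre's condition `T ≥ T_j(Z)` for all `j ≥ 1`, for the double points `Z` supported at the
`p i`: the inequality `⌊(2q + j - 2) / j⌋ ≤ T` is written without division as `2q ≤ Tj + 1`. -/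
def SegreCondition (K : Type*) {V ι : Type*} [Field K] [AddCommGroup V] [Module K V] (p : ι → V)
    (T : ℕ) : Prop :=
  ∀ (Q : Finset ι) (j : ℕ), 1 ≤ j → Set.finrank K (p '' Q) ≤ j + 1 → 2 * Q.card ≤ T * j + 1

namespace SegreCondition

variable {p : ι → V} {T : ℕ}

/-- The tangent direction `v` at `p i` and the other points, each taken twice, projected from
`p i`. -/
def projectFrom (p : ι → V) (i : ι) (v : V) (o : Option ({j // j ≠ i} × Bool)) : V ⧸ K ∙ p i :=
  (K ∙ p i).mkQ (o.elim v fun x => p x.1)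

section PointsOf

variable [Fintype ι] [DecidableEq ι]

/-- The indices of the points that occur in `A`. -/
def pointsOf {i : ι} (A : Finset (Option ({j // j ≠ i} × Bool))) : Finset ι :=
  {j | ∃ hj : j ≠ i, ∃ b, some (⟨j, hj⟩, b) ∈ A}

lemma card_le_two_mul_card_pointsOf_add_one {i : ι} (A : Finset (Option ({j // j ≠ i} × Bool))) :
    A.card ≤ 2 * (pointsOf A).card + 1 := by
  have h_subset : A ⊆ Finset.insertNone ((pointsOf A).subtype (· ≠ i) ×ˢ Finset.univ) := by
    rintro (_ | ⟨⟨j, hj⟩, b⟩) hA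
    · exact Finset.none_mem_insertNone
    · simp only [Finset.some_mem_insertNone, Finset.mem_product, Finset.mem_subtype, pointsOf,
        Finset.mem_filter_univ, Finset.mem_univ, and_true]
      exact ⟨hj, b, hA⟩
  have h_le := Finset.card_le_card h_subset
  have h_filter := Finset.card_filter_le (pointsOf A) (· ≠ i)
  rw [Finset.card_insertNone, Finset.card_product, Finset.card_subtype, Finset.card_univ,
    Fintype.card_bool] at h_le
  omega

lemma finrank_insert_pointsOf_le {i : ι} (v : V) (A : Finset (Option ({j // j ≠ i} × Bool))) :
    Set.finrank K (p '' (insert i (pointsOf A) : Finset ι)) ≤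
      Set.finrank K (projectFrom (K := K) p i v '' A) + 1 := by
  have h_image : (K ∙ p i).mkQ '' (p '' (insert i (pointsOf A) : Finset ι)) ⊆
      insert 0 (projectFrom (K := K) p i v '' A) := by
    rintro _ ⟨_, ⟨j, hj, rfl⟩, rfl⟩
    obtain rfl | hj := Finset.mem_insert.1 hj
    · simp
    · obtain ⟨hji, b, hb⟩ := (Finset.mem_filter.1 hj).2
      exact Set.mem_insert_of_mem _ ⟨_, hb, rfl⟩
  refine (finrank_le_finrank_image_mkQ_add_one ((Finset.finite_toSet _).image p) (p i)).trans ?_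
  refine Nat.add_le_add_right ((finrank_mono_of_finite
    ((A.finite_toSet.image _).insert 0) h_image).trans_eq ?_) 1
  rw [Set.finrank, Submodule.span_insert_zero, Set.finrank]

end PointsOf

lemma exists_coloring [Finite ι] (hT : SegreCondition K p T) {i : ι} {v : V}
    (hp : ∀ j ≠ i, p j ∉ K ∙ p i) (hv : v ∉ K ∙ p i) :
    ∃ f : Option ({j // j ≠ i} × Bool) → Fin T, ∀ c,
      LinearIndepOn K (projectFrom (K := K) p i v) {o | f o = c} := by
  classical
  have := Fintype.ofFinite ι
  refine exists_coloring_linearIndepOn _ T fun A => ?_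
  rcases A.eq_empty_or_nonempty with rfl | ⟨o, ho⟩
  · simp
  have h_ne : projectFrom (K := K) p i v o ≠ 0 := by
    rw [projectFrom, Submodule.mkQ_apply, ne_eq, Submodule.Quotient.mk_eq_zero]
    rcases o with _ | ⟨⟨j, hj⟩, b⟩
    exacts [hv, hp j hj]
  have h_rank_pos : 1 ≤ Set.finrank K (projectFrom (K := K) p i v '' A) := by
    rw [← finrank_span_singleton (K := K) h_ne]
    exact finrank_mono_of_finite (A.finite_toSet.image _) (Set.singleton_subset_iff.2 ⟨o, ho, rfl⟩)
  have h_segre := hT _ _ h_rank_pos (finrank_insert_pointsOf_le v A)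
  rw [Finset.card_insert_of_notMem (by simp [pointsOf])] at h_segre
  have h_card := card_le_two_mul_card_pointsOf_add_one A
  omega

lemma exists_interpolating_forms [Finite ι] (hT : SegreCondition K p T) {i : ι} {v : V}
    (hpi : p i ≠ 0) (hp : ∀ j ≠ i, p j ∉ K ∙ p i) (hv : v ∉ K ∙ p i) :
    ∃ f : Option ({j // j ≠ i} × Bool) → Fin T,
      (∀ j, f (some (j, false)) ≠ f (some (j, true))) ∧
      ∀ (a : Fin T → K) (b : Option ({j // j ≠ i} × Bool) → K),
        ∃ g : Fin T → Module.Dual K V, (∀ c, g c (p i) = a c) ∧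
          ∀ o, g (f o) (o.elim v fun x => p x.1) = b o := by
  obtain ⟨f, hf⟩ := hT.exists_coloring hp hv
  refine ⟨f, fun j hj => ?_, fun a b => ?_⟩
  · simpa using (hf _).injOn (x₁ := some (j, false)) (x₂ := some (j, true)) hj rfl rfl
  · choose g hga hgb using fun c => exists_dual_apply_eq_of_mkQ hpi (hf c) (a c) b
    exact ⟨g, hga, fun o => hgb _ o rfl⟩

end SegreCondition

end SegreCondition

section UpperBound

variable {K σ ι : Type*} [Field K] [Fintype σ] {p : ι → σ → K} {t : ℕ}

/-- Forms of degree `t` that are singular at all the points `p j` with `j ≠ i`. -/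
def singularForms (p : ι → σ → K) (t : ℕ) (i : ι) : Submodule K (MvPolynomial σ K) :=
  homogeneousSubmodule σ K t ⊓ ⨅ j ≠ i, LinearMap.ker (jet (p j))

lemma mem_singularForms {i : ι} {F : MvPolynomial σ K} :
    F ∈ singularForms p t i ↔ F.IsHomogeneous t ∧ ∀ j ≠ i, jet (p j) F = 0 := by
  simp only [singularForms, Submodule.mem_inf, mem_homogeneousSubmodule, Submodule.mem_iInf,
    LinearMap.mem_ker]

variable [Finite ι]

lemma separatesJets_of_ker_le_map
    (h : ∀ i, LinearMap.ker (eulerForm t (p i)) ≤ (singularForms p t i).map (jet (p i))) :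
    SeparatesJets p t := fun x hx => by
  have := Fintype.ofFinite ι
  choose F hF hFx using fun i => h i (hx i)
  simp only [SetLike.mem_coe, mem_singularForms] at hF
  refine ⟨∑ i, F i, IsHomogeneous.sum _ _ _ fun i _ => (hF i).1, fun i => ?_⟩
  rw [map_sum, Finset.sum_eq_single_of_mem i (Finset.mem_univ i) fun j _ hj => (hF j).2 i hj.symm,
    hFx]

namespace SegreCondition

lemma exists_mem_singularForms_eval_ne_zero (hT : SegreCondition K p t) {i : ι} {v : σ → K}
    (hpi : p i ≠ 0) (hp : ∀ j ≠ i, p j ∉ K ∙ p i) (hv : v ∉ K ∙ p i) :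
    ∃ F ∈ singularForms p t i, eval (p i) F ≠ 0 := by
  classical
  obtain ⟨f, hf, hg⟩ := hT.exists_interpolating_forms hpi hp hv
  obtain ⟨g, hgi, hgo⟩ := hg 1 0
  refine ⟨∏ c, linForm (g c),
    mem_singularForms.2 ⟨prod_linForm_isHomogeneous g, fun j hj => ?_⟩, ?_⟩
  · exact jet_prod_linForm_eq_zero (hf ⟨j, hj⟩) (hgo (some (⟨j, hj⟩, false)))
      (hgo (some (⟨j, hj⟩, true)))
  · simp [map_prod, hgi]

lemma exists_mem_singularForms_differential_ne_zero (hT : SegreCondition K p t) {i : ι}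
    {v : σ → K} (hpi : p i ≠ 0) (hp : ∀ j ≠ i, p j ∉ K ∙ p i) (hv : v ∉ K ∙ p i) :
    ∃ F ∈ singularForms p t i, eval (p i) F = 0 ∧ differential (p i) F v ≠ 0 := by
  classical
  obtain ⟨f, hf, hg⟩ := hT.exists_interpolating_forms hpi hp hv
  obtain ⟨g, hgi, hgo⟩ := hg (Function.update 1 (f none) 0) (Pi.single none 1)
  have hg0 : g (f none) (p i) = 0 := by simp [hgi]
  have hgv : g (f none) v = 1 := by simpa using hgo none
  refine ⟨∏ c, linForm (g c),
    mem_singularForms.2 ⟨prod_linForm_isHomogeneous g, fun j hj => ?_⟩, ?_, ?_⟩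
  · exact jet_prod_linForm_eq_zero (hf ⟨j, hj⟩) (by simpa using hgo (some (⟨j, hj⟩, false)))
      (by simpa using hgo (some (⟨j, hj⟩, true)))
  · rw [map_prod]
    exact Finset.prod_eq_zero (Finset.mem_univ (f none)) (by simpa using hg0)
  · rw [differential_prod_linForm hg0, LinearMap.smul_apply, hgv, smul_eq_mul, mul_one]
    exact Finset.prod_ne_zero_iff.2 fun c hc => by simp [hgi, (Finset.mem_erase.1 hc).1]

/-- By duality it suffices that a functional `(c, φ) ↦ a c + φ v` killing all jets is a multiple of
the Euler relation: the forms singular elsewhere force `v` to be a multiple of `p i`, and then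
determine `a`. -/
theorem separatesJets [Nontrivial σ] (hT : SegreCondition K p t) (hp : ∀ i, p i ≠ 0)
    (hpp : Pairwise fun i j => p i ∉ K ∙ p j) : SeparatesJets p t := by
  refine separatesJets_of_ker_le_map fun i x hx => ?_
  by_contra hx_notMem
  obtain ⟨ℓ, hℓx, hℓ⟩ := Submodule.exists_le_ker_of_notMem hx_notMem
  obtain ⟨a, v, hav⟩ := exists_apply_eq_mul_add ℓ
  have h_kill {F : MvPolynomial σ K} (hF : F ∈ singularForms p t i) :
      a * eval (p i) F + differential (p i) F v = 0 := by
    simpa [hav] using hℓ (Submodule.mem_map_of_mem hF)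
  have hp_i : ∀ j ≠ i, p j ∉ K ∙ p i := fun j hj => hpp hj
  by_cases hv : v ∈ K ∙ p i
  · obtain ⟨b, rfl⟩ := Submodule.mem_span_singleton.1 hv
    obtain ⟨u, hu⟩ : ∃ u, u ∉ K ∙ p i := by
      by_contra! h_all
      have h_le := (finrank_span_singleton (K := K) (hp i)).symm.trans_ge <|
        Submodule.finrank_mono (fun u _ => h_all u : ⊤ ≤ K ∙ p i)
      rw [finrank_top, Module.finrank_fintype_fun_eq_card] at h_le
      exact h_le.not_gt Fintype.one_lt_card
    obtain ⟨F, hF, hF_eval⟩ := hT.exists_mem_singularForms_eval_ne_zero (hp i) hp_i hu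
    have h_euler : differential (p i) F (p i) = t * eval (p i) F := by
      simpa [sub_eq_zero] using eulerForm_jet (mem_singularForms.1 hF).1 (p i)
    have ha : a = -(b * t) := by
      have := h_kill hF
      rw [map_smul, h_euler, smul_eq_mul] at this
      apply mul_right_cancel₀ hF_eval
      linear_combination this
    have hx_euler : x.2 (p i) = t * x.1 := by simpa [sub_eq_zero] using hx
    refine hℓx ?_
    rw [hav, ha, map_smul, hx_euler, smul_eq_mul]
    ring
  · obtain ⟨F, hF, hF_eval, hF_v⟩ :=
      hT.exists_mem_singularForms_differential_ne_zero (hp i) hp_i hv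
    exact hF_v (by simpa [hF_eval] using h_kill hF)

end SegreCondition

end UpperBound

section FatPoints

section Taylor

variable {K σ A : Type*} [Field K] [CommRing A] [Algebra K A]

lemma sum_aeval_pderiv_mul_X_mul [Fintype σ] (a y : σ → A) (F : MvPolynomial σ K) (k : σ) :
    ∑ j, aeval a (pderiv j (F * X k)) * y j =
      (∑ j, aeval a (pderiv j F) * y j) * a k + aeval a F * y k := by
  classical
  have h_term (j : σ) : aeval a (pderiv j (F * X k)) * y j =
      aeval a (pderiv j F) * y j * a k + if k = j then aeval a F * y j else 0 := by
    rw [pderiv_mul, pderiv_X, Pi.single_apply]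
    split_ifs <;> simp <;> ring
  simp_rw [h_term, Finset.sum_add_distrib, ← Finset.sum_mul, Finset.sum_ite_eq, Finset.mem_univ,
    if_true]

lemma aeval_add_sub_sub_mem_sq [Fintype σ] {I : Ideal A} (a : σ → A) {y : σ → A}
    (hy : ∀ j, y j ∈ I) (F : MvPolynomial σ K) :
    aeval (a + y) F - aeval a F - ∑ j, aeval a (pderiv j F) * y j ∈ I ^ 2 := by
  induction F using MvPolynomial.induction_on with
  | C c => simp
  | add F G hF hG =>
    convert add_mem hF hG using 1
    simp only [map_add, add_mul, Finset.sum_add_distrib]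
    ring
  | mul_X F k hF =>
    have h_second : (∑ j, aeval a (pderiv j F) * y j) * y k ∈ I ^ 2 :=
      pow_two I ▸ Ideal.mul_mem_mul (sum_mem fun j _ => I.mul_mem_left _ (hy j)) (hy k)
    convert add_mem (Ideal.mul_mem_right (a k + y k) _ hF) h_second using 1
    rw [sum_aeval_pderiv_mul_X_mul]
    simp only [map_mul, aeval_X, Pi.add_apply]
    ring

lemma aeval_mul_algebraMap {t : ℕ} {F : MvPolynomial σ K} (hF : F.IsHomogeneous t) (s : A)
    (P : σ → K) :
    aeval (fun j => s * algebraMap K A (P j)) F = s ^ t * algebraMap K A (eval P F) := by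
  rw [aeval_def, eval₂_eq, eval_eq, map_sum, Finset.mul_sum]
  refine Finset.sum_congr rfl fun d hd => ?_
  have h_deg : ∑ i ∈ d.support, d i = t := (hF.degree_eq_sum_deg_support hd).symm
  simp only [mul_pow, Finset.prod_mul_distrib, Finset.prod_pow_eq_pow_sum, h_deg, map_mul, map_prod,
    map_pow]
  ring

end Taylor

variable {K : Type} [Field K] {N t : ℕ} {P : Fin N → K} {F : MvPolynomial (Fin N) K}

lemma eval_eq_zero_of_mem_pointIdeal_s10 (hF : F ∈ pointIdeal P) : eval P F = 0 := by
  have h_le : pointIdeal P ≤ RingHom.ker (eval P) := Ideal.span_le.2 fun _ h => h.2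
  exact h_le hF

lemma jet_eq_zero_of_mem_pointIdeal_sq (hF : F ∈ pointIdeal P ^ 2) : jet P F = 0 := by
  rw [pow_two] at hF
  induction hF using Submodule.mul_induction_on' with
  | mem_mul_mem F hF G hG =>
    exact jet_mul_eq_zero (eval_eq_zero_of_mem_pointIdeal_s10 hF) (eval_eq_zero_of_mem_pointIdeal_s10 hG)
  | add F _ G _ hF hG => rw [map_add, hF, hG, add_zero]

/-- With `s = X k / P k`, the forms `X j - P j * s` lie in the ideal of `P`, so the Taylor expansion
at `s • P` shows that `F` agrees modulo its square with a form depending only on the jet of `F`. -/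
lemma mem_pointIdeal_sq_of_jet_eq_zero (hP : P ≠ 0) (hF : F.IsHomogeneous t) (h : jet P F = 0) :
    F ∈ pointIdeal P ^ 2 := by
  obtain ⟨h_eval, h_pderiv⟩ := jet_eq_zero_iff.1 h
  obtain ⟨k, hk : P k ≠ 0⟩ := Function.ne_iff.1 hP
  let s : MvPolynomial (Fin N) K := C (P k)⁻¹ * X k
  let a : Fin N → MvPolynomial (Fin N) K := fun j => s * algebraMap K _ (P j)
  have hs : s.IsHomogeneous 1 := isHomogeneous_C_mul_X _ _
  have h_mem (j : Fin N) : X j - a j ∈ pointIdeal P := by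
    refine Ideal.subset_span ⟨(isHomogeneous_X K j).sub (hs.mul (isHomogeneous_C _ _)), ?_⟩
    simp [s, a, hk]
  have h_taylor := aeval_add_sub_sub_mem_sq a (y := X - a) h_mem F
  simpa only [a, add_sub_cancel, aeval_X_left_apply, aeval_mul_algebraMap hF,
    aeval_mul_algebraMap hF.pderiv, h_eval, h_pderiv, map_zero, mul_zero, zero_mul, sub_zero,
    Finset.sum_const_zero] using h_taylor

lemma mem_pointIdeal_sq_iff (hP : P ≠ 0) (hF : F.IsHomogeneous t) :
    F ∈ pointIdeal P ^ 2 ↔ jet P F = 0 :=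
  ⟨jet_eq_zero_of_mem_pointIdeal_sq, mem_pointIdeal_sq_of_jet_eq_zero hP hF⟩

variable {n s : ℕ} {p : Fin s → Fin (n + 1) → K}

lemma gradedDim_fatIdeal_two (hp : ∀ i, p i ≠ 0) (t : ℕ) :
    gradedDim K (fatIdeal p fun _ => 2) t = Module.finrank K (LinearMap.ker (jetMap p t)) := by
  have h_map : homogeneousSubmodule (Fin (n + 1)) K t ⊓
      (fatIdeal p fun _ => 2).restrictScalars K =
        (LinearMap.ker (jetMap p t)).map (homogeneousSubmodule (Fin (n + 1)) K t).subtype := by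
    ext F
    simp only [Submodule.mem_inf, Submodule.restrictScalars_mem, Submodule.mem_map,
      LinearMap.mem_ker, Submodule.subtype_apply, Subtype.exists, exists_and_right,
      exists_eq_right, fatIdeal, Submodule.mem_iInf, mem_homogeneousSubmodule]
    rw [← exists_prop]
    refine exists_congr fun hF => ?_
    simp only [mem_pointIdeal_sq_iff (hp _) hF, funext_iff]
    rfl
  rw [gradedDim, h_map, Submodule.finrank_map_subtype_eq]

lemma fatMult_two (n s : ℕ) : fatMult n (fun _ : Fin s => 2) = s * (n + 1) := by
  simp [fatMult, show 2 + n - 1 = n + 1 by omega, Nat.choose_succ_self_right]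

lemma hilbFn_eq_fatMult_iff (hp : ∀ i, p i ≠ 0) (t : ℕ) :
    hilbFn K (fatIdeal p fun _ => 2) t = fatMult n (fun _ : Fin s => 2) ↔ SeparatesJets p t := by
  have h_rank := LinearMap.finrank_range_add_finrank_ker (jetMap p t)
  have h_ker := finrank_ker_eulerMap hp t
  rw [Fintype.card_fin, Fintype.card_fin] at h_ker
  rw [hilbFn, gradedDim_fatIdeal_two hp, fatMult_two, ← h_rank, Nat.add_sub_cancel, ← h_ker,
    separatesJets_iff_range_eq]
  exact ⟨Submodule.eq_of_le_of_finrank_eq (range_jetMap_le p t), fun h => by rw [h]⟩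

lemma onLinearSubspace_iff {Q : Finset (Fin s)} {j : ℕ} :
    OnLinearSubspace p Q j ↔ Set.finrank K (p '' Q) ≤ j + 1 := by
  refine ⟨fun ⟨W, hW, hQ⟩ => ?_, fun h => ⟨_, h, fun i hi => Submodule.subset_span ⟨i, hi, rfl⟩⟩⟩
  exact (Submodule.finrank_mono (Submodule.span_le.2 (Set.image_subset_iff.2 hQ))).trans hW

lemma two_mul_add_sub_two_div_le_iff {q j T : ℕ} (hq : 1 ≤ q) (hj : 1 ≤ j) :
    (2 * q + j - 2) / j ≤ T ↔ 2 * q ≤ T * j + 1 := by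
  rw [← Nat.lt_succ_iff, Nat.div_lt_iff_lt_mul hj, Nat.succ_mul T]
  omega

lemma segreBound_le_iff (hn : 1 ≤ n) {T : ℕ} :
    segreBound n p (fun _ => 2) ≤ T ↔ SegreCondition K p T := by
  classical
  have h_term (Q : Finset (Fin s)) {j : ℕ} (hj : 1 ≤ j) :
      (if Q.Nonempty ∧ OnLinearSubspace p Q j then (∑ i ∈ Q, 2 + j - 2) / j else 0) ≤ T ↔
        (Set.finrank K (p '' Q) ≤ j + 1 → 2 * Q.card ≤ T * j + 1) := by
    rcases Q.eq_empty_or_nonempty with rfl | hQ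
    · simp
    · rw [← onLinearSubspace_iff, Finset.sum_const, smul_eq_mul, mul_comm Q.card,
        ← two_mul_add_sub_two_div_le_iff hQ.card_pos hj]
      split_ifs with h <;> simp_all
  simp only [segreBound, Finset.sup_le_iff, Finset.mem_Icc, Finset.mem_powerset,
    Finset.subset_univ, forall_const]
  refine ⟨fun h Q j hj hQ => ?_, fun h j hj Q => (h_term Q hj.1).2 (h Q j hj.1)⟩
  rcases le_total j n with hjn | hnj
  · exact (h_term Q hj).1 (h j ⟨hj, hjn⟩ Q) hQ
  · have h_rank : Set.finrank K (p '' Q) ≤ n + 1 :=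
      (Submodule.finrank_le _).trans_eq (Module.finrank_fin_fun K)
    have := (h_term Q hn).1 (h n ⟨hn, le_rfl⟩ Q) h_rank
    nlinarith [Nat.mul_le_mul_left T hnj]

lemma ProjDistinct.pairwise_notMem_span (h : ProjDistinct p) :
    Pairwise fun i j => p i ∉ K ∙ p j := fun i j hij h_mem => by
  obtain ⟨c, hc⟩ := Submodule.mem_span_singleton.1 h_mem
  exact h.2 i j hij c hc.symm

end FatPoints

section Restriction

variable {K σ τ ι κ : Type*} [Field K] [Fintype τ]

section Pullback

variable [DecidableEq τ]

/-- Substitution of the coordinates of a linear map `L`: as a function, `pullback L F` is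
`F ∘ L`. -/
def pullback (L : (τ → K) →ₗ[K] σ → K) : MvPolynomial σ K →ₐ[K] MvPolynomial τ K :=
  aeval fun k => linForm (LinearMap.proj k ∘ₗ L)

lemma pullback_isHomogeneous (L : (τ → K) →ₗ[K] σ → K) {F : MvPolynomial σ K} {t : ℕ}
    (hF : F.IsHomogeneous t) : (pullback L F).IsHomogeneous t := by
  have h := hF.aeval (fun k => linForm (LinearMap.proj k ∘ₗ L)) fun _ => linForm_isHomogeneous _
  rwa [one_mul] at h

lemma pullback_X (L : (τ → K) →ₗ[K] σ → K) (k : σ) :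
    pullback L (X k) = linForm (LinearMap.proj k ∘ₗ L) :=
  aeval_X _ k

lemma eval_pullback (L : (τ → K) →ₗ[K] σ → K) (u : τ → K) (F : MvPolynomial σ K) :
    eval u (pullback L F) = eval (L u) F := by
  induction F using MvPolynomial.induction_on with
  | C c => simp [pullback]
  | add F G hF hG => rw [map_add, map_add, hF, hG, map_add]
  | mul_X F k hF => simp [hF, pullback_X]

lemma differential_pullback [Fintype σ] (L : (τ → K) →ₗ[K] σ → K) (u : τ → K)
    (F : MvPolynomial σ K) :
    differential u (pullback L F) = differential (L u) F ∘ₗ L := by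
  induction F using MvPolynomial.induction_on with
  | C c => simp [pullback]
  | add F G hF hG => rw [map_add, map_add, hF, hG, map_add, LinearMap.add_comp]
  | mul_X F k hF =>
    rw [map_mul, differential_mul, differential_mul, hF, pullback_X, eval_pullback,
      differential_linForm, differential_X, eval_linForm, eval_X, LinearMap.add_comp,
      LinearMap.smul_comp, LinearMap.smul_comp, LinearMap.comp_apply, LinearMap.proj_apply]

end Pullback

variable [Fintype σ] {p : ι → σ → K} {t : ℕ}

lemma SeparatesJets.of_map_eq (h : SeparatesJets p t) {L : (τ → K) →ₗ[K] σ → K}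
    (hL : Function.Injective L) {e : κ → ι} (he : Function.Injective e) {u : κ → τ → K}
    (hu : ∀ i, L (u i) = p (e i)) : SeparatesJets u t := fun x hx => by
  classical
  obtain ⟨R, hR⟩ := L.exists_leftInverse_of_injective (LinearMap.ker_eq_bot.2 hL)
  let y : ι → K × Module.Dual K (σ → K) :=
    Function.extend e (fun i => ((x i).1, (x i).2 ∘ₗ R)) 0
  have hy (i : κ) : y (e i) = ((x i).1, (x i).2 ∘ₗ R) := he.extend_apply _ _ i
  have hRu (i : κ) : R (p (e i)) = u i := by
    rw [← hu, ← LinearMap.comp_apply, hR, LinearMap.id_apply]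
  obtain ⟨F, hF, hFy⟩ := h y fun o => by
    by_cases ho : ∃ i, e i = o
    · obtain ⟨i, rfl⟩ := ho
      simpa [hy, hRu] using hx i
    · simp only [y, Function.extend_apply' _ _ _ ho, Pi.zero_apply, map_zero]
  refine ⟨pullback L F, pullback_isHomogeneous L hF, fun i => ?_⟩
  have h_jet := hFy (e i)
  rw [jet_apply, hy, Prod.mk.injEq] at h_jet
  rw [jet_apply, eval_pullback, differential_pullback, hu, h_jet.1, h_jet.2, LinearMap.comp_assoc,
    hR, LinearMap.comp_id]

end Restriction

section Subspaces

variable {K σ ι : Type*} [Field K] [Fintype σ]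

lemma exists_le_finrank_eq {V : Type*} [AddCommGroup V] [Module K V] [FiniteDimensional K V]
    (W : Submodule K V) {m : ℕ} (hWm : Module.finrank K W ≤ m) (hmV : m ≤ Module.finrank K V) :
    ∃ W' : Submodule K V, W ≤ W' ∧ Module.finrank K W' = m := by
  induction m, hWm using Nat.le_induction with
  | base => exact ⟨W, le_rfl, rfl⟩
  | succ m _ ih =>
    obtain ⟨W', hWW', hW'⟩ := ih (by omega)
    obtain ⟨v, -, hv⟩ := SetLike.exists_of_lt (lt_top_iff_ne_top.2
      fun h_top : W' = ⊤ => by rw [h_top, finrank_top] at hW'; omega)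
    exact ⟨W' ⊔ K ∙ v, hWW'.trans le_sup_left, by
      rw [Submodule.finrank_sup_span_singleton hv, hW']⟩

lemma exists_coordinates {p : ι → σ → K} {Q : Finset ι} {j : ℕ} (hj : j ≤ Fintype.card σ)
    (hQ : Set.finrank K (p '' Q) ≤ j) :
    ∃ (L : (Fin j → K) →ₗ[K] σ → K) (u : Q → Fin j → K), Function.Injective L ∧
      ∀ i, L (u i) = p i := by
  obtain ⟨W, hQW, hW⟩ := exists_le_finrank_eq _ hQ (by simpa using hj)
  let b := (Module.finBasisOfFinrankEq K W hW).equivFun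
  refine ⟨W.subtype ∘ₗ b.symm.toLinearMap,
    fun i => b ⟨p i, hQW (Submodule.subset_span ⟨i, i.2, rfl⟩)⟩,
    W.injective_subtype.comp b.symm.injective, fun i => by simp⟩

namespace SeparatesJets

variable {p : ι → σ → K} {t : ℕ} {Q : Finset ι} {j : ℕ}

lemma exists_restrict (h : SeparatesJets p t) (hp : ∀ i, p i ≠ 0) (hj : j ≤ Fintype.card σ)
    (hQ : Set.finrank K (p '' Q) ≤ j) :
    ∃ u : Q → Fin j → K, (∀ i, u i ≠ 0) ∧ SeparatesJets u t := by
  obtain ⟨L, u, hL, hu⟩ := exists_coordinates hj hQ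
  refine ⟨u, fun i hi => hp i ?_, h.of_map_eq hL Subtype.val_injective hu⟩
  rw [← hu, hi, map_zero]

lemma card_mul_le_of_finrank_le (h : SeparatesJets p t) (hp : ∀ i, p i ≠ 0)
    (hj : j ≤ Fintype.card σ) (hQ : Set.finrank K (p '' Q) ≤ j) :
    Q.card * j ≤ (j + t - 1).choose t := by
  obtain ⟨u, hu, hut⟩ := h.exists_restrict hp hj hQ
  simpa using hut.card_mul_le hu

end SeparatesJets

lemma exists_isHomogeneous_eval_eq_zero {u : ι → σ → K} [Fintype ι] {t : ℕ}
    (h_card : Fintype.card ι < (Fintype.card σ + t - 1).choose t) :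
    ∃ F : MvPolynomial σ K, F ≠ 0 ∧ F.IsHomogeneous t ∧ ∀ i, eval (u i) F = 0 := by
  let ev : homogeneousSubmodule σ K t →ₗ[K] ι → K :=
    LinearMap.pi fun i => (aeval (u i)).toLinearMap ∘ₗ (homogeneousSubmodule σ K t).subtype
  have h_ker : LinearMap.ker ev ≠ ⊥ := LinearMap.ker_ne_bot_of_finrank_lt (by
    rwa [finrank_homogeneousSubmodule, Module.finrank_fintype_fun_eq_card])
  obtain ⟨F, hF, hF0⟩ := Submodule.exists_mem_ne_zero_of_ne_bot h_ker
  exact ⟨F, fun h => hF0 (Subtype.ext h), F.2, congrFun (LinearMap.mem_ker.1 hF)⟩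

/-- The expected dimension count `5 * 3 = 15` is met, but the double conic through the points is
singular at all of them. -/
lemma SeparatesJets.card_ne_five_of_finrank_le_three {p : ι → σ → K} (h : SeparatesJets p 4)
    (hp : ∀ i, p i ≠ 0) (hσ : 3 ≤ Fintype.card σ) {Q : Finset ι}
    (hQ : Set.finrank K (p '' Q) ≤ 3) : Q.card ≠ 5 := fun hQ_card => by
  obtain ⟨u, hu, hut⟩ := h.exists_restrict hp hσ hQ
  obtain ⟨F, hF0, hF, hFu⟩ := exists_isHomogeneous_eval_eq_zero (u := u) (t := 2) (by
    rw [Fintype.card_coe, hQ_card]; decide)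
  refine mul_ne_zero hF0 hF0 (hut.eq_zero_of_jet_eq_zero hu ?_ (hF.mul hF) fun i =>
    jet_mul_eq_zero (hFu i) (hFu i))
  rw [Fintype.card_coe, hQ_card]
  decide

end Subspaces

section Homogeneous

variable {K σ : Type*} [Field K] {t : ℕ}

lemma degree_eq_of_mem_support {F : MvPolynomial σ K} (hF : F.IsHomogeneous t)
    {d : σ →₀ ℕ} (hd : d ∈ F.support) : d.degree = t :=
  by_contra fun h => mem_support_iff.1 hd (hF.coeff_eq_zero h)

lemma eval_single_one [DecidableEq σ] {G : MvPolynomial σ K} (hG : G.IsHomogeneous t) (k : σ) :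
    eval (Pi.single k 1) G = coeff (Finsupp.single k t) G := by
  rw [eval_eq, Finset.sum_eq_single (Finsupp.single k t)]
  · rw [Finset.prod_eq_one, mul_one]
    intro i _
    rcases eq_or_ne i k with rfl | hi <;> simp [*]
  · intro d hd hdk
    suffices ∃ i ≠ k, d i ≠ 0 by
      obtain ⟨i, hik, hi⟩ := this
      rw [Finset.prod_eq_zero (Finsupp.mem_support_iff.2 hi) (by simp [hik, hi]), mul_zero]
    by_contra! h
    have h_single : d = Finsupp.single k (d k) := by
      ext i
      rcases eq_or_ne i k with rfl | hi
      · simp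
      · simp [h i hi, hi]
    have h_deg := degree_eq_of_mem_support hG hd
    rw [h_single, Finsupp.degree_single] at h_deg
    exact hdk (h_deg ▸ h_single)
  · intro h
    rw [notMem_support_iff.1 h, zero_mul]

end Homogeneous

section PolarForm

variable {K σ : Type*} [Field K] [Fintype σ] [DecidableEq σ]

/-- If every monomial of `F` is the product of all but two of the variables, then
`F x = (∏ i, x i) * q (x⁻¹)` for a quadratic form `q`, and `polarForm a b F` is the value at
`(a⁻¹, b⁻¹)` of the polar form of `q`, multiplied by `∏ i, a i * b i` to clear denominators. -/
def polarForm (a b : σ → K) : MvPolynomial σ K →ₗ[K] K where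
  toFun F := ∑ i, a i * (∏ j ∈ Finset.univ.erase i, b j) * (eval a F - a i * eval a (pderiv i F))
  map_add' F G := by
    simp only [map_add, ← Finset.sum_add_distrib]
    exact Finset.sum_congr rfl fun _ _ => by ring
  map_smul' c F := by
    simp only [Derivation.map_smul, smul_eval, RingHom.id_apply, smul_eq_mul, Finset.mul_sum]
    exact Finset.sum_congr rfl fun _ _ => by ring

lemma polarForm_apply (a b : σ → K) (F : MvPolynomial σ K) :
    polarForm a b F =
      ∑ i, a i * (∏ j ∈ Finset.univ.erase i, b j) * (eval a F - a i * eval a (pderiv i F)) :=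
  rfl

lemma polarForm_monomial (a b : σ → K) (d : σ →₀ ℕ) :
    polarForm a b (monomial d 1) =
      (∏ i, a i ^ d i) * ∑ i, (1 - (d i : K)) * (a i * ∏ j ∈ Finset.univ.erase i, b j) := by
  have h_eval : eval a (monomial d 1) = ∏ i, a i ^ d i := by
    simp [eval_monomial, Finsupp.prod_fintype]
  rw [polarForm_apply, Finset.mul_sum]
  refine Finset.sum_congr rfl fun i _ => ?_
  have h_pderiv : a i * eval a (pderiv i (monomial d (1 : K))) = d i * ∏ i, a i ^ d i := by
    simpa [h_eval] using congrArg (eval a) (X_mul_pderiv_monomial (i := i) (m := d) (r := (1 : K)))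
  rw [h_eval, h_pderiv]
  ring

lemma polarForm_monomial_comm (a b : σ → K) {d : σ →₀ ℕ} (hd : ∀ i, d i ≤ 1)
    (hd_card : (Finset.univ.filter fun i => d i = 0).card = 2) :
    polarForm a b (monomial d 1) = polarForm b a (monomial d 1) := by
  obtain ⟨l, m, hlm, h_eq⟩ := Finset.card_eq_two.1 hd_card
  have h_zero (i : σ) : d i = 0 ↔ i = l ∨ i = m := by
    simpa using Finset.ext_iff.1 h_eq i
  have h_one {i : σ} (hi : ¬(i = l ∨ i = m)) : d i = 1 := by
    have := hd i
    have := mt (h_zero i).1 hi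
    omega
  have h_prod (c : σ → K) : ∏ i, c i ^ d i = ∏ i ∈ (Finset.univ.erase l).erase m, c i := by
    rw [← Finset.prod_subset (Finset.subset_univ ((Finset.univ.erase l).erase m))]
    · exact Finset.prod_congr rfl fun i hi => by
        rw [h_one (by simpa [and_comm] using hi), pow_one]
    · intro i _ hi
      rw [(h_zero i).2 (by by_contra! h; exact hi (by simp [h])), pow_zero]
  have h_sum (a b : σ → K) : ∑ i, (1 - (d i : K)) * (a i * ∏ j ∈ Finset.univ.erase i, b j) =
      (a l * b m + a m * b l) * ∏ i ∈ (Finset.univ.erase l).erase m, b i := by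
    rw [← Finset.sum_subset (Finset.subset_univ {l, m}), Finset.sum_pair hlm,
      (h_zero l).2 (.inl rfl), (h_zero m).2 (.inr rfl),
      ← Finset.mul_prod_erase (Finset.univ.erase l) b (a := m) (by simp [hlm.symm]),
      ← Finset.mul_prod_erase (Finset.univ.erase m) b (a := l) (by simp [hlm]),
      Finset.erase_right_comm (a := m)]
    · push_cast
      ring
    · intro i _ hi
      rw [h_one (by simpa using hi)]
      simp
  rw [polarForm_monomial, polarForm_monomial, h_prod, h_prod, h_sum, h_sum]
  ring

lemma polarForm_comm (a b : σ → K) {F : MvPolynomial σ K}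
    (hF : ∀ d ∈ F.support, (∀ i, d i ≤ 1) ∧ (Finset.univ.filter fun i => d i = 0).card = 2) :
    polarForm a b F = polarForm b a F := by
  rw [F.as_sum, map_sum, map_sum]
  refine Finset.sum_congr rfl fun d hd => ?_
  rw [← mul_one (coeff d F), ← smul_eq_mul, ← smul_monomial, map_smul, map_smul,
    polarForm_monomial_comm a b (hF d hd).1 (hF d hd).2]

lemma coeff_single_add_single_eq_zero {F : MvPolynomial σ K} {t : ℕ}
    (hF : F.IsHomogeneous (t + 1)) {k : σ} (h : jet (Pi.single k 1) F = 0) (j : σ) :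
    coeff (Finsupp.single k t + Finsupp.single j 1) F = 0 := by
  obtain ⟨h_eval, h_pderiv⟩ := jet_eq_zero_iff.1 h
  rcases eq_or_ne j k with rfl | hjk
  · rw [← Finsupp.single_add, ← eval_single_one hF, h_eval]
  · have := h_pderiv j
    rwa [eval_single_one hF.pderiv, coeff_pderiv, Nat.add_sub_cancel,
      Finsupp.single_eq_of_ne hjk, Nat.cast_zero, zero_add, mul_one] at this

lemma apply_le_one_of_mem_support {F : MvPolynomial σ K} (hF : F.IsHomogeneous 3)
    {k : σ} (h : jet (Pi.single k 1) F = 0) {d : σ →₀ ℕ} (hd : d ∈ F.support) : d k ≤ 1 := by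
  by_contra! hk
  obtain ⟨e, rfl⟩ := exists_add_of_le (Finsupp.single_le_iff.2 (Nat.succ_le_of_lt hk))
  have h_deg : e.degree = 1 := by
    have := degree_eq_of_mem_support hF hd
    rw [map_add, Finsupp.degree_single] at this
    omega
  obtain ⟨j, rfl⟩ := (Finsupp.sum_eq_one_iff e).1 h_deg
  exact mem_support_iff.1 hd (coeff_single_add_single_eq_zero hF h j)

end PolarForm

section SevenPoints

variable {K σ ι : Type*} [Field K] [Fintype σ] [DecidableEq σ] {u : ι → σ → K} {g : σ → ι} {x y : ι}

lemma polarForm_comm_of_jet_single_eq_zero (hσ : Fintype.card σ = 5) {F : MvPolynomial σ K}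
    (hF : F.IsHomogeneous 3) (h : ∀ k, jet (Pi.single k 1) F = 0) (a b : σ → K) :
    polarForm a b F = polarForm b a F := by
  refine polarForm_comm a b fun d hd => ?_
  have h_le (i : σ) : d i ≤ 1 := apply_le_one_of_mem_support hF (h i) hd
  refine ⟨h_le, ?_⟩
  have h_deg : ∑ i, d i = 3 := by
    rw [← Finsupp.degree_eq_sum, degree_eq_of_mem_support hF hd]
  have h_sum : ∑ i, (d i + if d i = 0 then 1 else 0) = 5 := by
    rw [← hσ, ← Finset.card_univ, Finset.card_eq_sum_ones]
    refine Finset.sum_congr rfl fun i _ => ?_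
    have := h_le i
    split_ifs <;> omega
  rw [Finset.sum_add_distrib, h_deg] at h_sum
  rw [Finset.card_filter]
  omega

/-- Test the symmetry of `polarForm` on a cubic that is singular at all the points except `u x`,
vanishes at `u x` and has there the differential `a j * X i - a i * X j`, where `a = u x`. -/
lemma SeparatesJets.mul_mul_prod_erase_eq (h : SeparatesJets u 3) (hσ : Fintype.card σ = 5)
    (hg : ∀ k, u (g k) = Pi.single k 1) (hx : x ∉ Set.range g) (hxy : x ≠ y) (i j : σ) :
    u x i * u x j * (u x i * ∏ k ∈ Finset.univ.erase i, u y k) =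
      u x i * u x j * (u x j * ∏ k ∈ Finset.univ.erase j, u y k) := by
  classical
  let φ : Module.Dual K (σ → K) := u x j • LinearMap.proj i - u x i • LinearMap.proj j
  obtain ⟨F, hF, hF_jet⟩ := h (Pi.single x (0, φ)) fun o => by
    rcases eq_or_ne o x with rfl | ho
    · simp [φ, mul_comm]
    · simp [ho]
  have hF_y : jet (u y) F = 0 := by rw [hF_jet, Pi.single_eq_of_ne hxy.symm]
  have hF_g (k : σ) : jet (Pi.single k 1) F = 0 := by
    rw [← hg, hF_jet, Pi.single_eq_of_ne fun hk => hx ⟨k, hk⟩]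
  have hF_x : jet (u x) F = (0, φ) := by rw [hF_jet, Pi.single_eq_same]
  rw [jet_apply, Prod.mk.injEq] at hF_x
  have h_comm := polarForm_comm_of_jet_single_eq_zero hσ hF hF_g (u x) (u y)
  rw [polarForm_apply, polarForm_apply] at h_comm
  simp only [(jet_eq_zero_iff.1 hF_y).1, (jet_eq_zero_iff.1 hF_y).2, hF_x.1,
    ← differential_apply_single, hF_x.2] at h_comm
  simp only [LinearMap.sub_apply, LinearMap.smul_apply, LinearMap.coe_proj, Function.eval,
    Pi.single_apply, smul_eq_mul, mul_ite, mul_one, mul_zero, mul_sub, zero_sub, neg_sub,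
    Finset.sum_sub_distrib, Finset.sum_ite_eq, Finset.mem_univ, ↓reduceIte, sub_self,
    Finset.sum_const_zero, φ] at h_comm
  linear_combination -h_comm

lemma SeparatesJets.card_add_card_mul_card_le {t : ℕ} (h : SeparatesJets u t) (hu : ∀ i, u i ≠ 0)
    (hg : ∀ k, u (g k) = Pi.single k 1) {S : Finset σ} {Y : Finset ι}
    (hY : ∀ y ∈ Y, y ∉ Set.range g) (hYS : ∀ y ∈ Y, ∀ k ∉ S, u y k = 0) :
    (Y.card + S.card) * S.card ≤ (S.card + t - 1).choose t := by
  classical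
  have hg_inj : Function.Injective g := fun k l hkl => by
    simpa [hg, Pi.single_apply] using congrFun (congrArg u hkl) k
  have h_disj : Disjoint Y (S.image g) := Finset.disjoint_left.2 fun y hy hyg => by
    obtain ⟨k, -, rfl⟩ := Finset.mem_image.1 hyg
    exact hY _ hy ⟨k, rfl⟩
  rw [← Finset.card_image_of_injective S hg_inj, ← Finset.card_union_of_disjoint h_disj,
    Finset.card_image_of_injective S hg_inj]
  refine h.card_mul_le_of_finrank_le hu (Finset.card_le_univ S)
    (finrank_le_card_of_apply_eq_zero ?_)
  rintro _ ⟨o, ho, rfl⟩ k hk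
  obtain ho | ho := Finset.mem_union.1 ho
  · exact hYS o ho k hk
  · obtain ⟨l, hl, rfl⟩ := Finset.mem_image.1 ho
    rw [hg, Pi.single_eq_of_ne fun hkl : k = l => hk (hkl ▸ hl)]

lemma SeparatesJets.apply_ne_zero_of_apply_eq_zero_of_ne (h : SeparatesJets u 3)
    (hσ : Fintype.card σ = 5) (hu : ∀ i, u i ≠ 0) (hg : ∀ k, u (g k) = Pi.single k 1)
    (hx : x ∉ Set.range g) {i j : σ} (hij : i ≠ j)
    (hi : u x i = 0) : u x j ≠ 0 := fun hj => by
  have h_zero : ∀ k ∉ ({i, j}ᶜ : Finset σ), u x k = 0 := fun k hk => by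
    obtain rfl | rfl : k = i ∨ k = j := by simpa [or_iff_not_imp_left] using hk
    exacts [hi, hj]
  have h_card := h.card_add_card_mul_card_le hu hg (Y := {x}) (by simpa using hx)
    fun y hy => Finset.mem_singleton.1 hy ▸ h_zero
  rw [Finset.card_compl, Finset.card_pair hij, hσ, Finset.card_singleton] at h_card
  exact absurd h_card (by decide)

lemma SeparatesJets.apply_ne_zero_of_apply_eq_zero (h : SeparatesJets u 3) (hσ : Fintype.card σ = 5)
    (hu : ∀ i, u i ≠ 0) (hg : ∀ k, u (g k) = Pi.single k 1) (hx : x ∉ Set.range g)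
    (hy : y ∉ Set.range g) (hxy : x ≠ y) {i : σ} (hi : u x i = 0) : u y i ≠ 0 := fun hj => by
  classical
  have h_card := h.card_add_card_mul_card_le hu hg (S := {i}ᶜ) (Y := {x, y})
    (by simp_all) (by simp_all)
  rw [Finset.card_compl, Finset.card_pair hxy, hσ, Finset.card_singleton] at h_card
  exact absurd h_card (by decide)

lemma SeparatesJets.apply_ne_zero (h : SeparatesJets u 3) (hσ : Fintype.card σ = 5)
    (hu : ∀ i, u i ≠ 0) (hg : ∀ k, u (g k) = Pi.single k 1) (hx : x ∉ Set.range g)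
    (hy : y ∉ Set.range g) (hxy : x ≠ y) (i : σ) : u y i ≠ 0 := fun hi => by
  have hxi : u x i ≠ 0 := h.apply_ne_zero_of_apply_eq_zero hσ hu hg hy hx hxy.symm hi
  have h_prod_ne : ∏ k ∈ Finset.univ.erase i, u y k ≠ 0 := Finset.prod_ne_zero_iff.2 fun k hk =>
    h.apply_ne_zero_of_apply_eq_zero_of_ne hσ hu hg hy (Finset.ne_of_mem_erase hk).symm hi
  obtain ⟨j, hji, hxj⟩ : ∃ j ≠ i, u x j ≠ 0 := by
    obtain ⟨j, l, hj, hl, hjl⟩ : ∃ j l : σ, j ≠ i ∧ l ≠ i ∧ j ≠ l := by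
      obtain ⟨j, hj, l, hl, hjl⟩ := (Finset.one_lt_card (s := Finset.univ.erase i)).1 (by
        rw [Finset.card_erase_of_mem (Finset.mem_univ i), Finset.card_univ, hσ]; decide)
      exact ⟨j, l, Finset.ne_of_mem_erase hj, Finset.ne_of_mem_erase hl, hjl⟩
    by_cases hxj : u x j = 0
    · exact ⟨l, hl, h.apply_ne_zero_of_apply_eq_zero_of_ne hσ hu hg hx hjl hxj⟩
    · exact ⟨j, hj, hxj⟩
  have h_prod_zero : ∏ k ∈ Finset.univ.erase j, u y k = 0 :=
    Finset.prod_eq_zero (Finset.mem_erase.2 ⟨hji.symm, Finset.mem_univ i⟩) hi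
  have h_rel := h.mul_mul_prod_erase_eq hσ hg hx hxy i j
  simp [h_prod_zero, hxi, hxj, h_prod_ne] at h_rel

lemma SeparatesJets.eq_of_notMem_range (h : SeparatesJets u 3) (hσ : Fintype.card σ = 5)
    (hu : ∀ i, u i ≠ 0) (hg : ∀ k, u (g k) = Pi.single k 1) (hx : x ∉ Set.range g)
    (hy : y ∉ Set.range g) : x = y := by
  classical
  by_contra hxy
  have hx_ne := h.apply_ne_zero hσ hu hg hy hx (Ne.symm hxy)
  have hy_ne := h.apply_ne_zero hσ hu hg hx hy hxy
  have h_minor (i j : σ) : u x i * u y j = u x j * u y i := by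
    have h_rel := mul_left_cancel₀ (mul_ne_zero (hx_ne i) (hx_ne j))
      (h.mul_mul_prod_erase_eq hσ hg hx hxy i j)
    have h_prod (k : σ) := Finset.mul_prod_erase Finset.univ (u y) (Finset.mem_univ k)
    apply mul_right_cancel₀ (Finset.prod_ne_zero_iff.2 fun k _ => hy_ne k : ∏ k, u y k ≠ 0)
    linear_combination u y i * u y j * h_rel - u x i * u y j * h_prod i + u x j * u y i * h_prod j
  obtain ⟨i⟩ : Nonempty σ := Fintype.card_pos_iff.1 (by omega)
  have hx_smul : u x = (u x i / u y i) • u y := by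
    ext j
    rw [Pi.smul_apply, smul_eq_mul, div_mul_eq_mul_div, eq_div_iff (hy_ne i), h_minor]
  have h_rank : Set.finrank K (u '' ({x, y} : Finset ι)) ≤ 1 := by
    have h_le : Submodule.span K (u '' ({x, y} : Finset ι)) ≤ K ∙ u y := Submodule.span_le.2 <| by
      rintro _ ⟨o, ho, rfl⟩
      obtain rfl | rfl : o = x ∨ o = y := by simpa using ho
      exacts [hx_smul ▸ Submodule.smul_mem _ _ (Submodule.mem_span_singleton_self _),
        Submodule.mem_span_singleton_self _]
    exact (Submodule.finrank_mono h_le).trans_eq (finrank_span_singleton (hu y))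
  have h_card := h.card_mul_le_of_finrank_le hu (by omega) h_rank
  rw [Finset.card_pair hxy] at h_card
  exact absurd h_card (by decide)

lemma SeparatesJets.card_le_six [Fintype ι] (h : SeparatesJets u 3)
    (hσ : Fintype.card σ = 5) (hu : ∀ i, u i ≠ 0) (hg : ∀ k, u (g k) = Pi.single k 1) :
    Fintype.card ι ≤ 6 := by
  classical
  have h_compl : (Finset.univ.image g)ᶜ.card ≤ 1 := Finset.card_le_one.2 fun x hx y hy =>
    h.eq_of_notMem_range hσ hu hg (by simpa using hx) (by simpa using hy)
  have h_image : (Finset.univ.image g).card ≤ 5 := Finset.card_image_le.trans_eq hσ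
  rw [Finset.card_compl] at h_compl
  omega

end SevenPoints

section Span

variable {K σ ι : Type*} [Field K] [Fintype σ] {p : ι → σ → K} {t : ℕ} {Q : Finset ι}

lemma SeparatesJets.exists_restrict_coordinate_points (h : SeparatesJets p t)
    (hp : ∀ i, p i ≠ 0) (Q : Finset ι) :
    ∃ (u : Q → Fin (Set.finrank K (p '' Q)) → K) (g : Fin (Set.finrank K (p '' Q)) → Q),
      (∀ i, u i ≠ 0) ∧ (∀ k, u (g k) = Pi.single k 1) ∧ SeparatesJets u t := by
  obtain ⟨f, hfQ, hf_span, hf⟩ := Submodule.exists_fun_fin_finrank_span_eq K (p '' Q)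
  let L : (Fin (Set.finrank K (p '' Q)) → K) →ₗ[K] σ → K := Fintype.linearCombination K f
  have hL : Function.Injective L := hf.fintypeLinearCombination_injective
  have hL_range : LinearMap.range L = Submodule.span K (p '' Q) :=
    (Fintype.range_linearCombination K f).trans hf_span
  choose u hu using fun i : Q => (hL_range ▸ Submodule.subset_span ⟨i, i.2, rfl⟩ :
    p i ∈ LinearMap.range L)
  choose g hgQ hg using hfQ
  refine ⟨u, fun k => ⟨g k, hgQ k⟩, fun i hi => hp i ?_, fun k => hL ?_,
    h.of_map_eq hL Subtype.val_injective hu⟩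
  · rw [← hu, hi, map_zero]
  · have hL_single : L (Pi.single k 1) = f k :=
      (Fintype.linearCombination_apply_single K f k 1).trans (one_smul K _)
    exact (hu _).trans ((hg k).trans hL_single.symm)

lemma SeparatesJets.card_le_six_of_finrank_le_five (h : SeparatesJets p 3) (hp : ∀ i, p i ≠ 0)
    (hσ : 5 ≤ Fintype.card σ) (hQ : Set.finrank K (p '' Q) ≤ 5) : Q.card ≤ 6 := by
  obtain hQ_eq | hQ_lt := hQ.eq_or_lt
  · obtain ⟨u, g, hu, hg, hut⟩ := h.exists_restrict_coordinate_points hp Q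
    simpa using hut.card_le_six (by rw [Fintype.card_fin, hQ_eq]) hu hg
  · have h_card := h.card_mul_le_of_finrank_le hp (by omega) (Nat.le_of_lt_succ hQ_lt)
    have h_choose : (4 + 3 - 1).choose 3 = 20 := by decide
    omega

end Span

section LowerBound

variable {K σ ι : Type*} [Field K] [Fintype σ] [Fintype ι] {p : ι → σ → K} {t : ℕ} {Q : Finset ι}
  {j : ℕ}

lemma card_add_card_le_of_span_eq_top (h_span : Submodule.span K (Set.range p) = ⊤) (Q : Finset ι) :
    Q.card + Fintype.card σ ≤ Fintype.card ι + Set.finrank K (p '' Q) := by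
  classical
  have h_sup : Submodule.span K (p '' Q) ⊔ Submodule.span K (Qᶜ.image p : Set (σ → K)) = ⊤ := by
    rw [← Submodule.span_union, Finset.coe_image, ← Set.image_union, Finset.coe_compl,
      Set.union_compl_self, Set.image_univ, h_span]
  have h_rank := Submodule.finrank_add_le_finrank_add_finrank (Submodule.span K (p '' Q))
    (Submodule.span K (Qᶜ.image p : Set (σ → K)))
  rw [h_sup, finrank_top, Module.finrank_fintype_fun_eq_card] at h_rank
  have h_compl := (finrank_span_finset_le_card (R := K) (Qᶜ.image p)).trans Finset.card_image_le
  rw [Finset.card_compl] at h_compl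
  have h_card := Finset.card_le_univ Q
  unfold Set.finrank at h_compl ⊢
  omega

lemma SeparatesJets.three_le (h : SeparatesJets p t) (hp : ∀ i, p i ≠ 0)
    (hσ : 2 ≤ Fintype.card σ) (hι : 2 ≤ Fintype.card ι) : 3 ≤ t := by
  obtain ⟨Q, -, hQ⟩ := Finset.exists_subset_card_eq (s := (Finset.univ : Finset ι)) hι
  classical
  have h_rank : Set.finrank K (p '' Q) ≤ 2 := by
    rw [← Finset.coe_image, ← hQ]
    exact (finrank_span_finset_le_card _).trans Finset.card_image_le
  have h_card := h.card_mul_le_of_finrank_le hp hσ h_rank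
  rw [hQ, show 2 + t - 1 = t + 1 by omega, Nat.choose_succ_self_right] at h_card
  omega

lemma SeparatesJets.two_mul_card_le (h : SeparatesJets p t) (hp : ∀ i, p i ≠ 0)
    (h_span : Submodule.span K (Set.range p) = ⊤) (h_card : Fintype.card ι ≤ Fintype.card σ + 2)
    (hj : 1 ≤ j) (hjσ : j + 1 ≤ Fintype.card σ) (hQ : Set.finrank K (p '' Q) ≤ j + 1) :
    2 * Q.card ≤ t * j + 1 := by
  have hσι : Fintype.card σ ≤ Fintype.card ι := by
    simpa using card_add_card_le_of_span_eq_top h_span ∅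
  have ht : 3 ≤ t := h.three_le hp (by omega) (by omega)
  have hQj : Q.card ≤ j + 3 := by
    have := card_add_card_le_of_span_eq_top h_span Q
    omega
  have h_count := h.card_mul_le_of_finrank_le hp hjσ hQ
  by_cases hlarge : 2 * j + 5 ≤ t * j
  · omega
  have hj4 : j ≤ 4 := by nlinarith
  have ht_small : j = 1 ∨ j = 2 ∧ t ≤ 4 ∨ 3 ≤ j ∧ t = 3 := by
    interval_cases j <;> omega
  obtain rfl | ⟨rfl, ht4⟩ | ⟨hj3, rfl⟩ := ht_small
  · rw [show 1 + 1 + t - 1 = t + 1 by omega, Nat.choose_succ_self_right] at h_count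
    omega
  · obtain rfl | rfl : t = 3 ∨ t = 4 := by omega
    · have h_choose : (2 + 1 + 3 - 1).choose 3 = 10 := by decide
      omega
    · have := h.card_ne_five_of_finrank_le_three hp hjσ hQ
      omega
  · obtain rfl | rfl : j = 3 ∨ j = 4 := by omega
    · have h_choose : (3 + 1 + 3 - 1).choose 3 = 20 := by decide
      omega
    · have := h.card_le_six_of_finrank_le_five hp hjσ hQ
      omega

lemma SeparatesJets.segreCondition (h : SeparatesJets p t) (hp : ∀ i, p i ≠ 0)
    (hσ : 2 ≤ Fintype.card σ) (h_span : Submodule.span K (Set.range p) = ⊤)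
    (h_card : Fintype.card ι ≤ Fintype.card σ + 2) : SegreCondition K p t := by
  intro Q j hj hQ
  by_cases hjσ : j + 1 ≤ Fintype.card σ
  · exact h.two_mul_card_le hp h_span h_card hj hjσ hQ
  have hQσ : Set.finrank K (p '' Q) ≤ Fintype.card σ - 1 + 1 := by
    have := Submodule.finrank_le (Submodule.span K (p '' Q))
    rw [Module.finrank_fintype_fun_eq_card] at this
    unfold Set.finrank
    omega
  calc 2 * Q.card ≤ t * (Fintype.card σ - 1) + 1 :=
        h.two_mul_card_le hp h_span h_card (by omega) (by omega) hQσ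
    _ ≤ t * j + 1 := by gcongr; omega

end LowerBound

lemma separatesJets_iff_segreCondition {K σ ι : Type*} [Field K] [Fintype σ] [Fintype ι]
    {p : ι → σ → K} (hσ : 2 ≤ Fintype.card σ) (h_card : Fintype.card ι ≤ Fintype.card σ + 2)
    (hp : ∀ i, p i ≠ 0) (hpp : Pairwise fun i j => p i ∉ K ∙ p j)
    (h_span : Submodule.span K (Set.range p) = ⊤) (t : ℕ) :
    SeparatesJets p t ↔ SegreCondition K p t := by
  have : Nontrivial σ := Fintype.one_lt_card_iff_nontrivial.1 hσ
  exact ⟨fun h => h.segreCondition hp hσ h_span h_card, fun h => h.separatesJets hp hpp⟩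

theorem stmt10_general {K : Type} [Field K] {n s : ℕ} (hn : 1 ≤ n) (hs : s ≤ n + 3)
    (p : Fin s → Fin (n + 1) → K) (hdist : ProjDistinct p)
    (hspan : Submodule.span K (Set.range p) = ⊤) :
    regFat K p (fun _ => 2) = segreBound n p (fun _ => 2) := by
  have h_iff (t : ℕ) : hilbFn K (fatIdeal p fun _ => 2) t = fatMult n (fun _ : Fin s => 2) ↔
      segreBound n p (fun _ => 2) ≤ t := by
    rw [hilbFn_eq_fatMult_iff hdist.1, segreBound_le_iff hn]
    exact separatesJets_iff_segreCondition (by simpa using hn) (by simpa using hs) hdist.1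
      hdist.pairwise_notMem_span hspan t
  calc regFat K p (fun _ => 2) = sInf (Set.Ici (segreBound n p fun _ => 2)) :=
        congrArg sInf (Set.ext h_iff)
    _ = segreBound n p (fun _ => 2) := csInf_Ici

/-- Proposition 4.2: `n+3` non-degenerate double points in `ℙⁿ` satisfy `reg(Z) = T(Z)`. -/
theorem stmt10 {K : Type} [Field K] [IsAlgClosed K] {n : ℕ} (hn : 2 ≤ n)
    (p : Fin (n + 3) → Fin (n + 1) → K) (hdist : ProjDistinct p)
    (hspan : Submodule.span K (Set.range p) = ⊤) :
    regFat K p (fun _ => 2) = segreBound n p (fun _ => 2) :=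
  stmt10_general (Nat.one_le_of_lt hn) le_rfl p hdist hspan
end
end
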